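/- arXiv:math/0012230 — 3 statements merged into one kernel-verified Lean document; each statement's English description precedes it below -/
import Mathlib

section
/- As n → ∞, the total number a(n) of n-step walks on the slit plane satisfies a(n) ∼ (√(1+√2) / (2·Γ(3/4))) · 4ⁿ · n^{−1/4}, i.e. the ratio of a(n) to this expression tends to 1. -/
open Filter PowerSeries

/-- The forbidden half-line `H = {(k,0) : k ≤ 0}`. -/
def slitH : Set (ℤ × ℤ) := {p : ℤ × ℤ | p.2 = 0 ∧ p.1 ≤ 0}

/-- The four steps of the ordinary square lattice. -/
def sqSteps : Set (ℤ × ℤ) := {(1,0), (-1,0), (0,1), (0,-1)}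

/-- `w : Fin (n+1) → ℤ × ℤ` is a walk on the slit plane with steps in `A`. -/
def IsSlitWalk (A : Set (ℤ × ℤ)) (n : ℕ) (w : Fin (n+1) → ℤ × ℤ) : Prop :=
  w 0 = (0,0) ∧ (∀ m : Fin n, w m.succ - w m.castSucc ∈ A) ∧
    ∀ m : Fin (n+1), 1 ≤ (m : ℕ) → w m ∉ slitH

/-- `a(n)`: the total number of walks on the slit plane of length `n`. -/
noncomputable def slitTotal (A : Set (ℤ × ℤ)) (n : ℕ) : ℕ :=
  Nat.card {w : Fin (n+1) → ℤ × ℤ // IsSlitWalk A n w}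


theorem ps_sqrt_unique {R : Type*} [CommRing R] [Algebra ℚ R] (a b : R⟦X⟧)
    (h : a ^ 2 = b ^ 2) (ha : constantCoeff a = 1) (hb : constantCoeff b = 1) : a = b := by
  have hu : IsUnit (a + b) := by
    rw [PowerSeries.isUnit_iff_constantCoeff, map_add, ha, hb]
    have : (1 + 1 : R) = algebraMap ℚ R 2 := by
      rw [show (2:ℚ) = 1 + 1 by norm_num, map_add, map_one]
    rw [this]
    exact (IsUnit.mk0 (2:ℚ) (by norm_num)).map _
  have h0 : (a + b) * (a - b) = 0 := by linear_combination h
  have := hu.mul_left_eq_zero.mp (by rw [mul_comm]; exact h0)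
  exact sub_eq_zero.mp this

theorem ps_sqrt_exists {R : Type*} [CommRing R] [Algebra ℚ R] (f : R⟦X⟧)
    (hf : constantCoeff f = 1) : ∃ g : R⟦X⟧, g ^ 2 = f ∧ constantCoeff g = 1 := by
  have hs : HasSubst (f - 1) := HasSubst.of_constantCoeff_zero' (by simp [hf])
  have h2 : (PowerSeries.binomialSeries R (1/2 : ℚ)) ^ 2 = 1 + X := by
    rw [pow_two, ← binomialSeries_add]
    have := binomialSeries_nat (R := ℚ) (A := R) 1
    rw [pow_one] at this
    rw [← this]; norm_num
  have h3 : (substAlgHom (R := R) hs (PowerSeries.binomialSeries R (1/2 : ℚ))) ^ 2 = f := by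
    rw [← map_pow, h2, map_add, map_one, substAlgHom_X]; ring
  refine ⟨_, h3, ?_⟩
  -- constant coefficient
  have hb : PowerSeries.binomialSeries R (1/2 : ℚ) = 1 + X * (PowerSeries.mk fun n => coeff (n+1) (PowerSeries.binomialSeries R (1/2 : ℚ))) := by
    conv_lhs => rw [PowerSeries.eq_X_mul_shift_add_const (PowerSeries.binomialSeries R (1/2 : ℚ))]
    rw [binomialSeries_constantCoeff, map_one, add_comm]
  rw [hb, map_add, map_one, map_mul, substAlgHom_X, map_add, map_mul]
  simp [hf]

/-- `√(1-X)`. -/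
noncomputable def sU : ℝ⟦X⟧ := rescale (-1) (PowerSeries.binomialSeries ℝ (1/2 : ℝ))

theorem bs_half_sq : (PowerSeries.binomialSeries ℝ (1/2 : ℝ)) ^ 2 = 1 + X := by
  rw [pow_two, ← binomialSeries_add]
  have := binomialSeries_nat (R := ℝ) (A := ℝ) 1
  rw [pow_one] at this
  rw [← this]; norm_num

theorem sU_sq : sU ^ 2 = 1 - X := by
  rw [sU, ← map_pow, bs_half_sq, map_add, map_one, rescale_neg_one_X]; ring

theorem sU_const : constantCoeff sU = 1 := by
  rw [← coeff_zero_eq_constantCoeff_apply, sU, coeff_rescale]; simp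

/-- `√((1+√(1-X))/2)`. -/
noncomputable def sC : ℝ⟦X⟧ := PowerSeries.mk fun n => coeff (2 * n) (PowerSeries.binomialSeries ℝ (1/2 : ℝ))

theorem sC_const : constantCoeff sC = 1 := by
  rw [← coeff_zero_eq_constantCoeff_apply, sC, coeff_mk]; simp

theorem sC_sq : 2 * sC ^ 2 = 1 + sU := by
  have hE : 2 * expand 2 two_ne_zero sC = PowerSeries.binomialSeries ℝ (1/2 : ℝ) + sU := by
    ext n
    have h2 : (2 : ℝ⟦X⟧) = PowerSeries.C (2:ℝ) := (map_ofNat PowerSeries.C 2).symm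
    rw [h2, coeff_C_mul, coeff_expand, map_add, sU, coeff_rescale]
    split_ifs with h
    · obtain ⟨m, rfl⟩ := h
      rw [sC, coeff_mk, Nat.mul_div_cancel_left _ two_pos, pow_mul]
      norm_num; ring
    · have : Odd n := by rwa [← Nat.not_even_iff_odd, even_iff_two_dvd]
      rw [this.neg_one_pow]; ring
  have hU : expand 2 two_ne_zero sU = PowerSeries.binomialSeries ℝ (1/2 : ℝ) * sU := by
    apply ps_sqrt_unique
    · rw [← map_pow, sU_sq, mul_pow, sU_sq, bs_half_sq, map_sub, map_one, expand_X]; ring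
    · rw [constantCoeff_expand, sU_const]
    · rw [map_mul, sU_const, binomialSeries_constantCoeff, mul_one]
  have hinj : Function.Injective (expand (R := ℝ) 2 two_ne_zero) := by
    intro a b h
    ext n
    have := congrArg (coeff (2 * n)) h
    simpa [coeff_expand_mul] using this
  have h4 : (2:ℝ⟦X⟧) * (2 * sC ^ 2) = 2 * (1 + sU) := by
    apply hinj
    have : expand (R := ℝ) 2 two_ne_zero (2 : ℝ⟦X⟧) = 2 := map_ofNat _ 2
    rw [map_mul, map_mul, this, map_pow, map_mul, map_add, map_one, hU, this]
    have e1 := bs_half_sq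
    have e2 := sU_sq
    linear_combination (2 * expand 2 two_ne_zero sC + (PowerSeries.binomialSeries ℝ (1/2 : ℝ) + sU)) * hE + e1 + e2
  have h2 : (2 : ℝ⟦X⟧) = PowerSeries.C (2:ℝ) := (map_ofNat PowerSeries.C 2).symm
  have hne : (2:ℝ⟦X⟧) ≠ 0 := by rw [h2]; simp
  exact mul_left_cancel₀ hne h4

open LaurentPolynomial in
/-- The algebraic core: the kernel equation, solved. -/
theorem kernel_algebra (A Ainv : (Polynomial ℝ)⟦X⟧) (A0 u v : ℝ⟦X⟧)
    (hA : 4 * A ^ 2 =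
      (PowerSeries.map Polynomial.C (1 + u) - PowerSeries.map Polynomial.C (1 - u) * PowerSeries.C Polynomial.X) *
      (PowerSeries.map Polynomial.C (1 + v) + PowerSeries.map Polynomial.C (1 - v) * PowerSeries.C Polynomial.X))
    (hAc : constantCoeff A = 1) (hAinv : A * Ainv = 1)
    (hu : u ^ 2 = 1 - 4 * X) (hv : v ^ 2 = 1 + 4 * X) :
    ∃ F : ℤ → (ℝ[T;T⁻¹])⟦X⟧,
      F 0 = PowerSeries.map Polynomial.toLaurent (PowerSeries.map Polynomial.C A0 * Ainv) ∧
      (∀ j, j ≠ 0 → constantCoeff (F j) = 0) ∧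
      ∀ j, F j = PowerSeries.C (T 1 + T (-1)) * X * F j + X * (F (j - 1) + F (j + 1)) +
        if j = 0 then PowerSeries.map
          ((LaurentPolynomial.invert (R := ℝ)).toRingEquiv.toRingHom.comp Polynomial.toLaurent)
          (PowerSeries.map Polynomial.C A0 * A) else 0 := by
  set φ : Polynomial ℝ →+* ℝ[T;T⁻¹] := Polynomial.toLaurent with hφ
  set ψ : Polynomial ℝ →+* ℝ[T;T⁻¹] :=
    (LaurentPolynomial.invert (R := ℝ)).toRingEquiv.toRingHom.comp Polynomial.toLaurent with hψ
  have hφC : φ.comp Polynomial.C = LaurentPolynomial.C := by ext r; simp [hφ]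
  have hψC : ψ.comp Polynomial.C = LaurentPolynomial.C := by ext r; simp [hψ]
  have hφX : φ Polynomial.X = T 1 := by simp [hφ]
  have hψX : ψ Polynomial.X = T (-1) := by simp [hψ]
  have mφ : ∀ f : ℝ⟦X⟧, PowerSeries.map φ (PowerSeries.map Polynomial.C f)
      = PowerSeries.map LaurentPolynomial.C f := by
    intro f; rw [← hφC]; rfl
  have mψ : ∀ f : ℝ⟦X⟧, PowerSeries.map ψ (PowerSeries.map Polynomial.C f)
      = PowerSeries.map LaurentPolynomial.C f := by
    intro f; rw [← hψC]; rfl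
  set U := PowerSeries.map (LaurentPolynomial.C (R := ℝ)) u
  set V := PowerSeries.map (LaurentPolynomial.C (R := ℝ)) v
  have hU : U ^ 2 = 1 - 4 * X := by
    rw [← map_pow, hu, map_sub, map_mul, map_one, PowerSeries.map_X, map_ofNat]
  have hV : V ^ 2 = 1 + 4 * X := by
    rw [← map_pow, hv, map_add, map_mul, map_one, PowerSeries.map_X, map_ofNat]
  have hAφ := congrArg (PowerSeries.map φ) hA
  have hAψ := congrArg (PowerSeries.map ψ) hA
  simp only [map_mul, map_add, map_sub, map_pow, map_one, mφ, mψ, PowerSeries.map_C, hφX, hψX,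
    map_ofNat] at hAφ hAψ
  set a := PowerSeries.map φ A
  set b := PowerSeries.map ψ A
  set x : (ℝ[T;T⁻¹])⟦X⟧ := PowerSeries.C (T 1)
  set y : (ℝ[T;T⁻¹])⟦X⟧ := PowerSeries.C (T (-1))
  have hxy : x * y = 1 := by
    simp only [x, y, ← map_mul, ← T_add]; simp
  set t : (ℝ[T;T⁻¹])⟦X⟧ := X
  have h16 : (16 : (ℝ[T;T⁻¹])⟦X⟧) * (a * b) ^ 2 = 16 * ((1 - (x + y) * t) ^ 2 - 4 * t ^ 2) := by
    have q1 : (1 + U - (1 - U) * x) * (1 + U - (1 - U) * y) = 4 * (1 - 2 * t - (x + y) * t) := by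
      linear_combination (1 - U) ^ 2 * hxy + (2 + x + y) * hU
    have q2 : (1 + V + (1 - V) * x) * (1 + V + (1 - V) * y) = 4 * (1 + 2 * t - (x + y) * t) := by
      linear_combination (1 - V) ^ 2 * hxy + (2 - x - y) * hV
    calc (16 : (ℝ[T;T⁻¹])⟦X⟧) * (a * b) ^ 2 = (4 * a ^ 2) * (4 * b ^ 2) := by ring
      _ = ((1 + U - (1 - U) * x) * (1 + U - (1 - U) * y)) *
          ((1 + V + (1 - V) * x) * (1 + V + (1 - V) * y)) := by rw [hAφ, hAψ]; ring
      _ = _ := by rw [q1, q2]; ring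
  have hunit : ∀ q : ℚ, q ≠ 0 → IsUnit (algebraMap ℚ (ℝ[T;T⁻¹]) q) :=
    fun q hq => (IsUnit.mk0 q hq).map _
  have hD : (a * b) ^ 2 = (1 - (x + y) * t) ^ 2 - 4 * t ^ 2 := by
    have : IsUnit (16 : (ℝ[T;T⁻¹])⟦X⟧) := by
      rw [PowerSeries.isUnit_iff_constantCoeff, map_ofNat]
      have := hunit 16 (by norm_num)
      rwa [map_ofNat] at this
    exact this.mul_left_cancel h16
  set c := x + y
  have hac : constantCoeff a = 1 := by
    simp only [a, ← coeff_zero_eq_constantCoeff_apply, PowerSeries.coeff_map]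
    rw [coeff_zero_eq_constantCoeff_apply, hAc, map_one]
  have hbc : constantCoeff b = 1 := by
    simp only [b, ← coeff_zero_eq_constantCoeff_apply, PowerSeries.coeff_map]
    rw [coeff_zero_eq_constantCoeff_apply, hAc, map_one]
  set E := 1 - c * t + a * b with hE
  have hEu : IsUnit E := by
    rw [PowerSeries.isUnit_iff_constantCoeff]
    have h2 := hunit 2 (by norm_num)
    rw [map_ofNat] at h2
    have : constantCoeff E = 2 := by
      simp only [E, t, map_add, map_sub, map_mul, hac, hbc, map_one, constantCoeff_X]
      norm_num
    rwa [this]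
  obtain ⟨Ei, hEi⟩ := hEu.exists_right_inv
  set Y := 2 * t * Ei with hY
  have hYE : Y * E = 2 * t := by rw [hY]; linear_combination 2 * t * hEi
  have hEE : E ^ 2 - 2 * E * (1 - c * t) + 4 * t ^ 2 = 0 := by
    rw [hE]; linear_combination hD
  have hY1 : Y * (1 - c * t) = t * (1 + Y ^ 2) := by
    apply (hEu.pow 2).mul_left_cancel
    linear_combination (E * (1 - c * t) - t * (Y * E + 2 * t)) * hYE - t * hEE
  have hY2 : 1 - c * t - 2 * t * Y = a * b := by
    apply hEu.mul_left_cancel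
    have : a * b = E - (1 - c * t) := by rw [hE]; ring
    rw [this]
    linear_combination (-2 * t) * hYE - hEE
  have hYc : constantCoeff Y = 0 := by
    simp only [hY, t, map_mul, constantCoeff_X]; simp
  have haAinv : a * PowerSeries.map φ Ainv = 1 := by
    rw [← map_mul, hAinv, map_one]
  set F0 := PowerSeries.map φ (PowerSeries.map Polynomial.C A0 * Ainv) with hF0
  refine ⟨fun j => F0 * Y ^ j.natAbs, by simp, ?_, ?_⟩
  · intro j hj
    rw [map_mul, map_pow, hYc, zero_pow (Int.natAbs_ne_zero.mpr hj), mul_zero]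
  · intro j
    have hcc : PowerSeries.C (T 1 + T (-1) : ℝ[T;T⁻¹]) = c := by rw [map_add]
    rw [hcc]
    have key : ∀ k : ℕ, Y ^ (k+1) = c * t * Y ^ (k+1) + t * (Y ^ k + Y ^ (k+2)) := by
      intro k
      linear_combination Y ^ k * hY1
    beta_reduce
    rcases lt_trichotomy j 0 with h | h | h
    · obtain ⟨k, rfl⟩ : ∃ k : ℕ, j = -((k:ℤ) + 1) := ⟨(-j-1).toNat, by omega⟩
      rw [if_neg (by omega), show (-((k:ℤ) + 1)).natAbs = k + 1 by omega,
        show (-((k:ℤ) + 1) - 1).natAbs = k + 2 by omega,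
        show (-((k:ℤ) + 1) + 1).natAbs = k by omega]
      linear_combination F0 * key k
    · subst h
      have : PowerSeries.map ψ (PowerSeries.map Polynomial.C A0 * A) = F0 * (a * b) := by
        rw [hF0, map_mul, map_mul, mφ, mψ]
        linear_combination (-(PowerSeries.map (LaurentPolynomial.C (R := ℝ)) A0) * b) * haAinv
      rw [if_pos rfl, this, ← hY2]
      norm_num
      ring
    · obtain ⟨k, rfl⟩ : ∃ k : ℕ, j = (k:ℤ) + 1 := ⟨(j-1).toNat, by omega⟩
      rw [if_neg (by omega), show ((k:ℤ) + 1).natAbs = k + 1 by omega,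
        show ((k:ℤ) + 1 - 1).natAbs = k by omega,
        show ((k:ℤ) + 1 + 1).natAbs = k + 2 by omega]
      linear_combination F0 * key k

/-- The four steps, indexed. -/
def stepF : Fin 4 → ℤ × ℤ := ![(1,0), (-1,0), (0,1), (0,-1)]

theorem stepF_inj : Function.Injective stepF := by
  unfold stepF; decide

theorem mem_sqSteps_iff (p : ℤ × ℤ) : p ∈ sqSteps ↔ ∃ s, stepF s = p := by
  simp only [sqSteps, Set.mem_insert_iff, Set.mem_singleton_iff, Fin.exists_fin_succ, stepF]
  simp [eq_comm]

theorem isSlitWalk_snoc (n : ℕ) (w : Fin (n+1) → ℤ × ℤ) (p : ℤ × ℤ) :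
    IsSlitWalk sqSteps (n+1) (Fin.snoc (α := fun _ => ℤ × ℤ) w p) ↔
      IsSlitWalk sqSteps n w ∧ p - w (Fin.last n) ∈ sqSteps ∧ p ∉ slitH := by
  unfold IsSlitWalk
  rw [Fin.forall_fin_succ' (P := fun m : Fin (n+1) => _ ∈ sqSteps),
    Fin.forall_fin_succ' (P := fun m : Fin (n+1+1) => 1 ≤ (m : ℕ) → _)]
  have h0 : (0 : Fin (n+1+1)) = Fin.castSucc 0 := rfl
  rw [h0]
  simp only [Fin.succ_castSucc, Fin.snoc_castSucc, Fin.succ_last, Fin.snoc_last, Fin.val_castSucc]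
  simp
  tauto

theorem slit_finite (n : ℕ) : {w | IsSlitWalk sqSteps n w}.Finite := by
  induction n with
  | zero =>
    refine (Set.finite_singleton (fun _ => (0,0))).subset ?_
    intro w hw
    ext m : 1
    rw [show m = 0 from Fin.fin_one_eq_zero m]; exact hw.1
  | succ n ih =>
    refine ((ih.prod (Set.finite_univ (α := Fin 4))).image
      (fun x => Fin.snoc (α := fun _ => ℤ × ℤ) x.1 (x.1 (Fin.last n) + stepF x.2))).subset ?_
    intro w hw
    have hw2 : w = Fin.snoc (α := fun _ => ℤ × ℤ) (Fin.init w) (w (Fin.last (n+1))) :=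
      (Fin.snoc_init_self w).symm
    have hw1 : IsSlitWalk sqSteps (n+1) w := hw
    rw [hw2, isSlitWalk_snoc, mem_sqSteps_iff] at hw1
    obtain ⟨h1, ⟨s, hs⟩, h3⟩ := hw1
    refine ⟨(Fin.init w, s), ⟨h1, Set.mem_univ _⟩, ?_⟩
    dsimp only
    rw [hs, add_sub_cancel]; exact hw2.symm

/-- Number of walks ending at a given point. -/
noncomputable def slitCnt (n : ℕ) (p : ℤ × ℤ) : ℕ :=
  Nat.card {w : Fin (n+1) → ℤ × ℤ // IsSlitWalk sqSteps n w ∧ w (Fin.last n) = p}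

theorem slitCnt_zero (p : ℤ × ℤ) : slitCnt 0 p = if p = (0,0) then 1 else 0 := by
  unfold slitCnt
  split_ifs with h
  · rw [Nat.card_eq_one_iff_unique]
    constructor
    · constructor
      rintro ⟨w, hw⟩ ⟨w', hw'⟩
      apply Subtype.ext
      ext m : 1
      rw [show m = 0 from Fin.fin_one_eq_zero m]
      exact hw.1.1.trans hw'.1.1.symm
    · refine ⟨⟨fun _ => (0,0), ⟨rfl, fun m => m.elim0, ?_⟩, h.symm⟩⟩
      intro m hm
      have := m.2
      omega
  · have : IsEmpty {w : Fin (0+1) → ℤ × ℤ // IsSlitWalk sqSteps 0 w ∧ w (Fin.last 0) = p} := by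
      constructor
      rintro ⟨w, hw⟩
      exact h (hw.2.symm.trans hw.1.1)
    exact Nat.card_of_isEmpty

theorem slitCnt_succ_mem (n : ℕ) (p : ℤ × ℤ) (hp : p ∈ slitH) : slitCnt (n+1) p = 0 := by
  have : IsEmpty {w : Fin (n+1+1) → ℤ × ℤ // IsSlitWalk sqSteps (n+1) w ∧ w (Fin.last (n+1)) = p} := by
    constructor
    rintro ⟨w, hw⟩
    refine hw.1.2.2 (Fin.last (n+1)) (by simp) ?_
    rw [hw.2]; exact hp
  exact Nat.card_of_isEmpty

theorem slitCnt_succ_notMem (n : ℕ) (p : ℤ × ℤ) (hp : p ∉ slitH) :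
    slitCnt (n+1) p = ∑ s : Fin 4, slitCnt n (p - stepF s) := by
  have hfin : ∀ q, Finite {w : Fin (n+1) → ℤ × ℤ // IsSlitWalk sqSteps n w ∧ w (Fin.last n) = q} := by
    intro q
    exact ((slit_finite n).subset (fun w hw => hw.1) :
      {w | IsSlitWalk sqSteps n w ∧ w (Fin.last n) = q}.Finite).to_subtype
  unfold slitCnt
  rw [← Nat.card_sigma]
  symm
  refine Nat.card_congr (Equiv.ofBijective (fun x =>
    ⟨Fin.snoc (α := fun _ => ℤ × ℤ) x.2.1 p, ?_, ?_⟩) ⟨?_, ?_⟩)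
  · rw [isSlitWalk_snoc]
    refine ⟨x.2.2.1, ?_, hp⟩
    rw [x.2.2.2, sub_sub_cancel, mem_sqSteps_iff]; exact ⟨_, rfl⟩
  · rw [Fin.snoc_last]
  · rintro ⟨s, w, hw⟩ ⟨s', w', hw'⟩ h
    have h1 := congrArg (Fin.init (α := fun _ => ℤ × ℤ)) (Subtype.mk.inj h)
    simp only [Fin.init_snoc] at h1
    subst h1
    have : s = s' := stepF_inj (sub_right_injective (hw.2.symm.trans hw'.2))
    subst this
    rfl
  · rintro ⟨w, hw, hl⟩
    have hw2 : w = Fin.snoc (α := fun _ => ℤ × ℤ) (Fin.init w) (w (Fin.last (n+1))) :=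
      (Fin.snoc_init_self w).symm
    have hw1 := hw
    rw [hw2, isSlitWalk_snoc, mem_sqSteps_iff, hl] at hw1
    obtain ⟨h1, ⟨s, hs⟩, h3⟩ := hw1
    refine ⟨⟨s, Fin.init w, h1, ?_⟩, ?_⟩
    · rw [hs, sub_sub_cancel]
    · apply Subtype.ext
      dsimp only
      rw [← hl]; exact hw2.symm

theorem slitCnt_hasSum (n : ℕ) : HasSum (fun p => (slitCnt n p : ℝ)) (slitTotal sqSteps n : ℝ) := by
  classical
  set W := (slit_finite n).toFinset with hW
  have hc : ∀ p, slitCnt n p = (W.filter (fun w => w (Fin.last n) = p)).card := by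
    intro p
    apply Nat.subtype_card
    intro x; simp [hW]
  have ht : slitTotal sqSteps n = W.card := by
    apply Nat.subtype_card
    intro x; simp [hW]
  rw [ht, Finset.card_eq_sum_card_image (fun w => w (Fin.last n)) W]
  push_cast
  simp_rw [hc]
  apply hasSum_sum_of_ne_finset_zero
  intro p hp
  rw [Nat.cast_eq_zero, Finset.card_eq_zero, Finset.filter_eq_empty_iff]
  intro w hw h
  exact hp (Finset.mem_image.mpr ⟨w, hw, h⟩)

theorem slitTotal_rec (G : ℕ → ℤ × ℤ → ℝ) (β : ℕ → ℤ → ℝ) (B : ℕ → ℝ)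
    (h0 : ∀ p, G 0 p = if p = (0,0) then 1 else 0)
    (hG : ∀ n i j, G (n+1) (i,j) = G n (i-1,j) + G n (i+1,j) + G n (i,j-1) + G n (i,j+1)
      + if j = 0 then β (n+1) i else 0)
    (hH : ∀ n i, i ≤ 0 → G (n+1) (i,0) = 0)
    (hβ : ∀ n i, 0 < i → β n i = 0) (hB : ∀ n, HasSum (β n) (B n)) (n : ℕ) :
    (slitTotal sqSteps (n+1) : ℝ) = 4 * slitTotal sqSteps n + B (n+1) := by
  have hcnt : ∀ n p, (slitCnt n p : ℝ) = G n p := by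
    intro n
    induction n with
    | zero => intro p; rw [h0, slitCnt_zero]; split_ifs <;> simp
    | succ n ih =>
      rintro ⟨i, j⟩
      by_cases hp : (i, j) ∈ slitH
      · rw [slitCnt_succ_mem _ _ hp]
        obtain ⟨h1, h2⟩ := hp
        dsimp only at h1 h2
        subst h1
        rw [hH n i h2]; simp
      · rw [slitCnt_succ_notMem _ _ hp, hG]
        have : (if j = 0 then β (n+1) i else 0) = 0 := by
          split_ifs with h
          · apply hβ
            by_contra hi
            exact hp ⟨h, not_lt.mp hi⟩
          · rfl
        rw [this]
        push_cast
        simp only [Fin.sum_univ_four, ih, stepF]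
        simp
  have hs : ∀ n, HasSum (G n) (slitTotal sqSteps n : ℝ) := by
    intro n
    have := slitCnt_hasSum n
    simp_rw [hcnt] at this
    exact this
  have hsh : ∀ s : ℤ × ℤ, HasSum (fun p => G n (p + s)) (slitTotal sqSteps n : ℝ) := by
    intro s
    exact (Equiv.addRight s).hasSum_iff.mpr (hs n)
  have hb : HasSum (fun p : ℤ × ℤ => if p.2 = 0 then β (n+1) p.1 else 0) (B (n+1)) := by
    have hinj : Function.Injective (fun i : ℤ => ((i, 0) : ℤ × ℤ)) := by
      intro a b h; simpa using h
    rw [← hinj.hasSum_iff]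
    · simpa [Function.comp_def] using hB (n+1)
    · rintro ⟨i, j⟩ h
      have : j ≠ 0 := by rintro rfl; exact h ⟨i, rfl⟩
      simp [this]
  have key := ((((hsh (-1,0)).add (hsh (1,0))).add (hsh (0,-1))).add (hsh (0,1))).add hb
  have e : (fun p => G (n+1) p) = (fun p : ℤ × ℤ => G n (p + (-1,0)) + G n (p + (1,0)) + G n (p + (0,-1))
      + G n (p + (0,1)) + if p.2 = 0 then β (n+1) p.1 else 0) := by
    ext ⟨i, j⟩
    rw [hG]
    simp [sub_eq_add_neg]
  have := (hs (n+1)).unique (by rw [show G (n+1) = fun p => G (n+1) p from rfl, e]; exact key)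
  rw [this]; ring

theorem slitTotal_zero : (slitTotal sqSteps 0 : ℝ) = 1 := by
  have h := slitCnt_hasSum 0
  simp_rw [slitCnt_zero] at h
  refine h.unique ?_
  convert! hasSum_ite_eq ((0,0) : ℤ × ℤ) (1:ℝ) using 2
  split_ifs <;> simp

open LaurentPolynomial in
theorem toLaurent_coeff_eq (q : Polynomial ℝ) (i : ℤ) :
    (Polynomial.toLaurent q).coeff i = if 0 ≤ i then q.coeff i.toNat else 0 := by
  induction q using Polynomial.induction_on' with
  | add p q hp hq =>
    rw [map_add, AddMonoidAlgebra.coeff_add, Finsupp.add_apply, hp, hq, Polynomial.coeff_add]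
    split_ifs <;> simp
  | monomial n a =>
    rw [← Polynomial.C_mul_X_pow_eq_monomial, Polynomial.toLaurent_C_mul_X_pow,
      ← single_eq_C_mul_T, AddMonoidAlgebra.coeff_single, Finsupp.single_apply,
      Polynomial.coeff_C_mul_X_pow]
    split_ifs <;> first | rfl | omega

open LaurentPolynomial in
theorem psi_coeff (q : Polynomial ℝ) (i : ℤ) :
    (((LaurentPolynomial.invert (R := ℝ)).toRingEquiv.toRingHom.comp Polynomial.toLaurent) q).coeff i
      = if 0 ≤ -i then q.coeff (-i).toNat else 0 := by
  rw [← toLaurent_coeff_eq]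
  change (LaurentPolynomial.invert (Polynomial.toLaurent q)).coeff i = _
  rw [LaurentPolynomial.invert_apply]

theorem psi_hasSum (q : Polynomial ℝ) :
    HasSum (fun i : ℤ => if 0 ≤ -i then q.coeff (-i).toNat else 0) (q.eval 1) := by
  have hinj : Function.Injective (fun n : ℕ => -(n : ℤ)) := by
    intro a b h; simpa using h
  rw [← hinj.hasSum_iff]
  · have : ((fun i : ℤ => if 0 ≤ -i then q.coeff (-i).toNat else 0) ∘ fun n : ℕ => -(n : ℤ))
        = fun n => q.coeff n := by
      ext n; simp
    rw [this, Polynomial.eval_eq_sum_range]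
    simp only [one_pow, mul_one]
    apply hasSum_sum_of_ne_finset_zero
    intro n hn
    apply Polynomial.coeff_eq_zero_of_natDegree_lt
    simpa using hn
  · intro i hi
    rw [if_neg]
    intro h
    exact hi ⟨(-i).toNat, by simp; omega⟩

open LaurentPolynomial in
theorem coeff_T_mul (k i : ℤ) (f : ℝ[T;T⁻¹]) : (T k * f).coeff i = f.coeff (i - k) := by
  unfold LaurentPolynomial.T
  rw [AddMonoidAlgebra.coeff_single_mul_apply, one_mul, neg_add_eq_sub]

open LaurentPolynomial in
theorem slit_gf (u v : ℝ⟦X⟧) (hu : u ^ 2 = 1 - 4 * X) (hv : v ^ 2 = 1 + 4 * X)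
    (huc : constantCoeff u = 1) (hvc : constantCoeff v = 1) :
    ∃ A0 A1 : ℝ⟦X⟧, constantCoeff A0 = 1 ∧ constantCoeff A1 = 1 ∧
      4 * A0 ^ 2 = (1 + u) * (1 + v) ∧ A1 ^ 2 = u ∧
      (PowerSeries.mk fun n => (slitTotal sqSteps n : ℝ)) * (1 - 4 * X) = A0 * A1 := by
  set P : (Polynomial ℝ)⟦X⟧ :=
    (PowerSeries.map Polynomial.C (1 + u) - PowerSeries.map Polynomial.C (1 - u) * PowerSeries.C Polynomial.X) *
      (PowerSeries.map Polynomial.C (1 + v) + PowerSeries.map Polynomial.C (1 - v) * PowerSeries.C Polynomial.X)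
    with hP
  have mc : ∀ {R S : Type} [CommRing R] [CommRing S] (g : R →+* S) (f : R⟦X⟧),
      constantCoeff (PowerSeries.map g f) = g (constantCoeff f) := by
    intro R S _ _ g f
    simp only [← coeff_zero_eq_constantCoeff_apply, PowerSeries.coeff_map]
  have hPc : constantCoeff P = 4 := by
    simp only [hP, map_mul, map_add, map_sub, mc, huc, hvc, map_one]
    norm_num
  have h4 : (4 : (Polynomial ℝ)⟦X⟧) * PowerSeries.C (Polynomial.C (1/4 : ℝ)) = 1 := by
    rw [show (4 : (Polynomial ℝ)⟦X⟧) = PowerSeries.C (Polynomial.C (4:ℝ)) by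
      rw [map_ofNat, map_ofNat], ← map_mul, ← map_mul]
    norm_num
  obtain ⟨A, hA, hAc⟩ := ps_sqrt_exists (PowerSeries.C (Polynomial.C (1/4 : ℝ)) * P) (by
    rw [map_mul, hPc, constantCoeff_C, show (4 : Polynomial ℝ) = Polynomial.C 4 from (map_ofNat _ 4).symm, ← map_mul]
    norm_num)
  have hA' : 4 * A ^ 2 = P := by rw [hA, ← mul_assoc, h4, one_mul]
  have hAu : IsUnit A := by rw [PowerSeries.isUnit_iff_constantCoeff, hAc]; exact isUnit_one
  obtain ⟨Ainv, hAinv⟩ := hAu.exists_right_inv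
  set e0 := Polynomial.evalRingHom (0:ℝ)
  set e1 := Polynomial.evalRingHom (1:ℝ)
  have me0 : ∀ f : ℝ⟦X⟧, PowerSeries.map e0 (PowerSeries.map Polynomial.C f) = f := by
    intro f; ext n; simp [e0]
  have me1 : ∀ f : ℝ⟦X⟧, PowerSeries.map e1 (PowerSeries.map Polynomial.C f) = f := by
    intro f; ext n; simp [e1]
  set A0 := PowerSeries.map e0 A with hA0
  set A1 := PowerSeries.map e1 A with hA1
  obtain ⟨F, hF0, hFc, hF⟩ := kernel_algebra A Ainv A0 u v hA' hAc hAinv hu hv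
  have hA0c : constantCoeff A0 = 1 := by rw [hA0, mc, hAc, map_one]
  refine ⟨A0, A1, hA0c, by rw [hA1, mc, hAc, map_one], ?_, ?_, ?_⟩
  · have := congrArg (PowerSeries.map e0) hA'
    rw [hP] at this
    simp only [map_mul, map_add, map_sub, map_pow, map_one, me0, map_ofNat, PowerSeries.map_C] at this
    rw [this]
    simp [e0]
  · have := congrArg (PowerSeries.map e1) hA'
    rw [hP] at this
    simp only [map_mul, map_add, map_sub, map_pow, map_one, me1, map_ofNat, PowerSeries.map_C] at this
    have h4' : (4:ℝ⟦X⟧) ≠ 0 := by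
      rw [show (4 : ℝ⟦X⟧) = PowerSeries.C (4:ℝ) from (map_ofNat _ 4).symm]; simp
    apply mul_left_cancel₀ h4'
    rw [this]
    simp [e1]
    ring
  · set Q := PowerSeries.map Polynomial.C A0 * A with hQ
    have hQ1 : PowerSeries.map e1 Q = A0 * A1 := by rw [hQ, map_mul, me1]
    have hB : ∀ n, (coeff n Q).eval 1 = coeff n (A0 * A1) := by
      intro n; rw [← hQ1, PowerSeries.coeff_map]; rfl
    have hAinvc : constantCoeff Ainv = 1 := by
      have := congrArg constantCoeff hAinv
      rwa [map_mul, hAc, one_mul, map_one] at this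
    have hrec := slitTotal_rec (fun n p => (coeff n (F p.2)).coeff p.1)
      (fun n i => if 0 ≤ -i then (coeff n Q).coeff (-i).toNat else 0)
      (fun n => coeff n (A0 * A1)) ?_ ?_ ?_ ?_ ?_
    · ext n
      rw [show (PowerSeries.mk fun n => (slitTotal sqSteps n : ℝ)) * (1 - 4 * X)
        = (PowerSeries.mk fun n => (slitTotal sqSteps n : ℝ)) - PowerSeries.C 4 *
          ((PowerSeries.mk fun n => (slitTotal sqSteps n : ℝ)) * X) by rw [map_ofNat]; ring]
      rw [map_sub, coeff_C_mul, coeff_mk]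
      cases n with
      | zero =>
        rw [coeff_zero_mul_X, slitTotal_zero]
        simp [hA0c, hA1, mc, hAc]
      | succ n =>
        rw [coeff_succ_mul_X, coeff_mk, hrec n]; ring
    · rintro ⟨i, j⟩
      dsimp only
      by_cases hj : j = 0
      · subst hj
        rw [hF0, PowerSeries.coeff_map, coeff_zero_eq_constantCoeff_apply, map_mul, mc, hA0c, hAinvc]
        rw [map_one, mul_one, map_one, ← LaurentPolynomial.T_zero, LaurentPolynomial.T_apply]
        by_cases hi : i = 0
        · simp [hi]
        · rw [if_neg (Ne.symm hi), if_neg (by simp [hi])]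
      · rw [coeff_zero_eq_constantCoeff_apply, hFc j hj]
        simp [hj]
    · intro n i j
      dsimp only
      have := congrArg (coeff (n+1)) (hF j)
      rw [show PowerSeries.C (T 1 + T (-1) : ℝ[T;T⁻¹]) * X * F j
        = PowerSeries.C (T 1 + T (-1) : ℝ[T;T⁻¹]) * (X * F j) by ring, map_add, map_add, coeff_C_mul,
        coeff_succ_X_mul, coeff_succ_X_mul, map_add] at this
      have h2 := congrArg (fun f : ℝ[T;T⁻¹] => f.coeff i) this
      rw [h2, add_mul]
      simp only [AddMonoidAlgebra.coeff_add, Finsupp.add_apply, coeff_T_mul]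
      have h3 : (coeff (n+1) (if j = 0 then PowerSeries.map
          ((LaurentPolynomial.invert (R := ℝ)).toRingEquiv.toRingHom.comp Polynomial.toLaurent) Q
          else 0)).coeff i = if j = 0 then (if 0 ≤ -i then (coeff (n+1) Q).coeff (-i).toNat else 0) else 0 := by
        by_cases hj : j = 0
        · rw [if_pos hj, if_pos hj, PowerSeries.coeff_map, psi_coeff]
        · rw [if_neg hj, if_neg hj]; simp
      rw [h3, sub_neg_eq_add]
      ring
    · intro n i hi
      dsimp only
      rw [hF0, PowerSeries.coeff_map, toLaurent_coeff_eq]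
      split_ifs with h
      · have : i = 0 := by omega
        subst this
        rw [Int.toNat_zero, Polynomial.coeff_zero_eq_eval_zero]
        have : PowerSeries.map e0 (PowerSeries.map Polynomial.C A0 * Ainv) = 1 := by
          rw [map_mul, me0, hA0, ← map_mul, hAinv, map_one]
        have h5 := congrArg (coeff (n+1)) this
        rw [PowerSeries.coeff_map] at h5
        change Polynomial.eval 0 _ = _ at h5
        rw [h5, coeff_one, if_neg (by omega)]
      · rfl
    · intro n i hi
      rw [if_neg (by omega)]
    · intro n
      rw [← hB]
      exact psi_hasSum _

theorem bs_const (r : ℝ) : constantCoeff (PowerSeries.binomialSeries ℝ r) = 1 :=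
  PowerSeries.binomialSeries_constantCoeff r

theorem rescale_const (r : ℝ) (f : ℝ⟦X⟧) : constantCoeff (rescale r f) = constantCoeff f := by
  rw [← coeff_zero_eq_constantCoeff_apply, coeff_rescale]; simp

theorem bs_pow4 : (PowerSeries.binomialSeries ℝ (-(3/4) : ℝ)) ^ 4 * (1 + X) ^ 3 = 1 := by
  rw [← PowerSeries.binomialSeries_nat (R := ℝ) (A := ℝ) 3, ← PowerSeries.binomialSeries_zero (R := ℝ) (A := ℝ)]
  rw [show ∀ x : ℝ⟦X⟧, x ^ 4 = x * x * x * x by intro x; ring]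
  simp only [← PowerSeries.binomialSeries_add]
  norm_num

theorem slit_series :
    (PowerSeries.mk fun n => (slitTotal sqSteps n : ℝ)) =
      rescale 4 (rescale (-1) (PowerSeries.binomialSeries ℝ (-(3/4) : ℝ)) * sC * rescale (-1) sC) := by
  set u := rescale (4:ℝ) sU with hu
  set v := rescale (4:ℝ) (rescale (-1) sU) with hv
  set d := rescale (4:ℝ) (rescale (-1) (PowerSeries.binomialSeries ℝ (-(3/4) : ℝ))) with hd
  set c1 := rescale (4:ℝ) sC with hc1
  set c2 := rescale (4:ℝ) (rescale (-1) sC) with hc2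
  have e4 : PowerSeries.C (4:ℝ) = 4 := map_ofNat _ 4
  have hu2 : u ^ 2 = 1 - 4 * X := by
    rw [hu, ← map_pow, sU_sq, map_sub, map_one, rescale_X, e4]
  have hv2 : v ^ 2 = 1 + 4 * X := by
    rw [hv, ← map_pow, ← map_pow, sU_sq, map_sub, map_one, rescale_neg_one_X, map_sub, map_one,
      map_neg, rescale_X, e4]; ring
  have huc : constantCoeff u = 1 := by rw [hu, rescale_const, sU_const]
  have hvc : constantCoeff v = 1 := by rw [hv, rescale_const, rescale_const, sU_const]
  have hc1s : 2 * c1 ^ 2 = 1 + u := by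
    have := congrArg (rescale (4:ℝ)) sC_sq
    simpa only [map_mul, map_pow, map_add, map_one, map_ofNat] using this
  have hc2s : 2 * c2 ^ 2 = 1 + v := by
    have := congrArg (fun f => rescale (4:ℝ) (rescale (-1) f)) sC_sq
    simpa only [map_mul, map_pow, map_add, map_one, map_ofNat] using this
  have hd4 : d ^ 4 * (1 - 4 * X) ^ 3 = 1 := by
    have := congrArg (fun f => rescale (4:ℝ) (rescale (-1) f)) bs_pow4
    simp only [map_mul, map_pow, map_add, map_one, rescale_neg_one_X, map_neg, rescale_X, e4] at this
    rw [← hd] at this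
    linear_combination this
  have hdc : constantCoeff d = 1 := by rw [hd, rescale_const, rescale_const, bs_const]
  have hc1c : constantCoeff c1 = 1 := by rw [hc1, rescale_const, sC_const]
  have hc2c : constantCoeff c2 = 1 := by rw [hc2, rescale_const, rescale_const, sC_const]
  have h14 : constantCoeff (1 - 4 * X : ℝ⟦X⟧) = 1 := by simp
  have hdu : d ^ 2 * (1 - 4 * X) ^ 2 = u := by
    apply ps_sqrt_unique
    · rw [hu2]; linear_combination (1 - 4 * X) * hd4
    · rw [map_mul, map_pow, map_pow, hdc, h14]; norm_num
    · exact huc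
  obtain ⟨A0, A1, hA0c, hA1c, hA0, hA1, hS⟩ := slit_gf u v hu2 hv2 huc hvc
  have h4' : (4:ℝ⟦X⟧) ≠ 0 := by
    rw [← e4]; simp
  have hne : (1 - 4 * X : ℝ⟦X⟧) ≠ 0 := by
    intro h; rw [h] at h14; simp at h14
  rw [map_mul, map_mul]
  apply mul_right_cancel₀ hne
  rw [hS]
  apply ps_sqrt_unique
  · apply mul_left_cancel₀ h4'
    calc 4 * (A0 * A1) ^ 2 = (4 * A0 ^ 2) * A1 ^ 2 := by ring
      _ = (2 * c1 ^ 2) * (2 * c2 ^ 2) * (d ^ 2 * (1 - 4 * X) ^ 2) := by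
        rw [hA0, hA1, hc1s, hc2s, hdu]
      _ = _ := by ring
  · rw [map_mul, hA0c, hA1c, mul_one]
  · rw [map_mul, map_mul, map_mul, hdc, hc1c, hc2c, h14]; norm_num

theorem choose_neg_formula (s : ℝ) (n : ℕ) :
    (-1) ^ n * Ring.choose (-s) n = (∏ j ∈ Finset.range n, (s + j)) / n.factorial := by
  have h := Ring.descPochhammer_eq_factorial_smul_choose (-s) n
  have h2 : (descPochhammer ℤ n).smeval (-s) = ∏ j ∈ Finset.range n, (-s - j) := by
    rw [← descPochhammer_eval_eq_prod_range, ← Polynomial.aeval_eq_smeval, Polynomial.aeval_def,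
      ← Polynomial.eval_map, descPochhammer_map]
  rw [h2, nsmul_eq_mul] at h
  have hf : (n.factorial : ℝ) ≠ 0 := by positivity
  rw [eq_div_iff hf, mul_assoc, mul_comm (Ring.choose _ _), ← h]
  have : ((-1:ℝ)) ^ n = ∏ j ∈ Finset.range n, (-1 : ℝ) := by simp
  rw [this, ← Finset.prod_mul_distrib]
  apply Finset.prod_congr rfl
  intro j _; ring

theorem tendsto_shift_ratio (k : ℕ) (r : ℝ) :
    Tendsto (fun n : ℕ => (((n:ℝ) + k + 1) / (n + 1)) ^ r) atTop (nhds 1) := by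
  have h1 : Tendsto (fun n : ℕ => ((n:ℝ) + k + 1) / (n + 1)) atTop (nhds 1) := by
    have : Tendsto (fun n : ℕ => 1 + (k:ℝ) * (1 / ((n:ℝ) + 1))) atTop (nhds (1 + k * 0)) :=
      (tendsto_one_div_add_atTop_nhds_zero_nat.const_mul _).const_add _
    simp only [mul_zero, add_zero] at this
    refine this.congr ?_
    intro n
    have : (n:ℝ) + 1 ≠ 0 := by positivity
    field_simp; ring
  simpa using h1.rpow_const (p := r) (Or.inl one_ne_zero)

theorem tendsto_choose (s : ℝ) (hs : ∀ m : ℕ, s ≠ -m) :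
    Tendsto (fun n : ℕ => ((-1) ^ n * Ring.choose (-s) n) * ((n:ℝ) + 1) ^ (1 - s)) atTop
      (nhds (1 / Real.Gamma s)) := by
  have hG : Real.Gamma s ≠ 0 := Real.Gamma_ne_zero hs
  have h1 := (Real.GammaSeq_tendsto_Gamma s).inv₀ hG
  have h2 : Tendsto (fun n : ℕ => (n:ℝ) / (n + s)) atTop (nhds 1) :=
    tendsto_natCast_div_add_atTop s
  have h3 : Tendsto (fun n : ℕ => (((n:ℝ) + 1) / n) ^ (1 - s)) atTop (nhds 1) := by
    rw [← tendsto_add_atTop_iff_nat 1]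
    have := tendsto_shift_ratio 1 (1 - s)
    refine this.congr ?_
    intro n; push_cast; rfl
  have h4 := (h1.mul h2).mul h3
  simp only [mul_one] at h4
  rw [one_div]
  refine h4.congr' ?_
  filter_upwards [eventually_gt_atTop 0] with n hn
  have hn' : (0:ℝ) < n := by exact_mod_cast hn
  have hsn : s + n ≠ 0 := by
    intro h; exact hs n (by linarith)
  have hP : ∏ j ∈ Finset.range n, (s + j) ≠ 0 := by
    rw [Finset.prod_ne_zero_iff]
    intro j _ h; exact hs j (by linarith)
  rw [choose_neg_formula, Real.GammaSeq, Finset.prod_range_succ, Real.div_rpow (by positivity) hn'.le,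
    Real.rpow_sub hn', Real.rpow_one]
  have hf : (n.factorial : ℝ) ≠ 0 := by positivity
  have hr : (n:ℝ) ^ s ≠ 0 := (Real.rpow_pos_of_pos hn' s).ne'
  rw [add_comm (n:ℝ) s]
  field_simp

theorem bounded_of_tendsto {x : ℕ → ℝ} {L : ℝ} (h : Tendsto x atTop (nhds L)) :
    ∃ M, 0 ≤ M ∧ ∀ n, |x n| ≤ M := by
  obtain ⟨M, hM⟩ := h.abs.bddAbove_range
  exact ⟨M, (abs_nonneg _).trans (hM ⟨0, rfl⟩), fun n => hM ⟨n, rfl⟩⟩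

theorem conv_lemma (b c : ℕ → ℝ) (L K : ℝ)
    (hb : Tendsto (fun n : ℕ => b n * ((n:ℝ) + 1) ^ (1/4 : ℝ)) atTop (nhds L))
    (hc : ∀ n : ℕ, |c n| ≤ K * ((n:ℝ) + 1) ^ (-(3/2) : ℝ)) :
    Tendsto (fun n : ℕ => (∑ p ∈ Finset.HasAntidiagonal.antidiagonal n, b p.1 * c p.2) * ((n:ℝ) + 1) ^ (1/4 : ℝ))
      atTop (nhds (L * ∑' n, c n)) := by
  obtain ⟨M, hM0, hM⟩ := bounded_of_tendsto hb
  have hK : 0 ≤ K := by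
    have := (abs_nonneg _).trans (hc 0)
    simpa using this
  have hsumm : Summable (fun k : ℕ => M * K * ((k:ℝ) + 1) ^ (-(5/4) : ℝ)) := by
    apply Summable.mul_left
    have := (summable_nat_add_iff 1).mpr (Real.summable_nat_rpow (p := -(5/4)).mpr (by norm_num))
    simpa using this
  have key : Tendsto (fun n : ℕ => ∑' k, if k ≤ n then c k * (b (n - k) * ((n:ℝ) + 1) ^ (1/4 : ℝ)) else 0)
      atTop (nhds (∑' k, c k * L)) := by
    refine tendsto_tsum_of_dominated_convergence hsumm ?_ ?_
    · intro k
      have : Tendsto (fun n => c k * (b (n - k) * ((n:ℝ) + 1) ^ (1/4 : ℝ))) atTop (nhds (c k * L)) := by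
        apply Tendsto.const_mul
        rw [← tendsto_add_atTop_iff_nat k]
        have h := hb.mul (tendsto_shift_ratio k (1/4))
        rw [mul_one] at h
        refine h.congr ?_
        intro n
        rw [Nat.add_sub_cancel, mul_assoc, ← Real.mul_rpow (by positivity) (by positivity),
          mul_div_cancel₀ _ (by positivity)]
        push_cast; rfl
      refine this.congr' ?_
      filter_upwards [eventually_ge_atTop k] with n hn
      rw [if_pos hn]
    · refine Eventually.of_forall ?_
      intro n k
      split_ifs with hk
      · rw [Real.norm_eq_abs, abs_mul, abs_mul]
        obtain ⟨m, rfl⟩ := Nat.exists_eq_add_of_le hk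
        rw [Nat.add_sub_cancel_left]
        have h1 := hM m
        rw [abs_mul, abs_of_nonneg (Real.rpow_nonneg (by positivity : (0:ℝ) ≤ (m:ℝ)+1) _)] at h1
        rw [abs_of_nonneg (Real.rpow_nonneg (by positivity) _)]
        have h2 : (((k + m : ℕ) : ℝ) + 1) ^ (1/4 : ℝ) ≤ ((m:ℝ) + 1) ^ (1/4 : ℝ) * ((k:ℝ) + 1) ^ (1/4 : ℝ) := by
          rw [← Real.mul_rpow (by positivity) (by positivity)]
          apply Real.rpow_le_rpow (by positivity) _ (by norm_num)
          push_cast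
          have : (0:ℝ) ≤ m * k := by positivity
          nlinarith
        have h3 : ((k:ℝ) + 1) ^ (-(5/4) : ℝ) = ((k:ℝ) + 1) ^ (-(3/2) : ℝ) * ((k:ℝ) + 1) ^ (1/4 : ℝ) := by
          rw [← Real.rpow_add (by positivity)]; norm_num
        rw [h3]
        calc |c k| * (|b m| * (((k + m : ℕ) : ℝ) + 1) ^ (1/4 : ℝ))
            ≤ (K * ((k:ℝ) + 1) ^ (-(3/2) : ℝ)) *
              (|b m| * (((m:ℝ) + 1) ^ (1/4 : ℝ) * ((k:ℝ) + 1) ^ (1/4 : ℝ))) := by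
              gcongr
              exact hc k
          _ = (|b m| * ((m:ℝ) + 1) ^ (1/4 : ℝ)) *
              (K * (((k:ℝ) + 1) ^ (-(3/2) : ℝ) * ((k:ℝ) + 1) ^ (1/4 : ℝ))) := by ring
          _ ≤ M * (K * (((k:ℝ) + 1) ^ (-(3/2) : ℝ) * ((k:ℝ) + 1) ^ (1/4 : ℝ))) := by
              gcongr
          _ = _ := by ring
      · simp only [norm_zero]; positivity
  rw [tsum_mul_right, mul_comm] at key
  refine key.congr ?_
  intro n
  rw [tsum_eq_sum (s := Finset.range (n+1))]
  · rw [Finset.Nat.antidiagonal_eq_map', Finset.sum_map, Finset.sum_mul]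
    apply Finset.sum_congr rfl
    intro k hk
    rw [if_pos (by simpa [Nat.lt_succ_iff] using hk)]
    change c k * (b (n - k) * ((n:ℝ) + 1) ^ (1/4 : ℝ)) = b (n - k) * c k * ((n:ℝ) + 1) ^ (1/4 : ℝ)
    ring
  · intro k hk
    rw [if_neg (by simpa [Nat.lt_succ_iff] using hk)]

theorem choose_half_bound : ∃ K : ℝ, 0 ≤ K ∧ ∀ n : ℕ,
    |Ring.choose (1/2 : ℝ) n| ≤ K * ((n:ℝ) + 1) ^ (-(3/2) : ℝ) := by
  have h := tendsto_choose (-(1/2)) (by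
    intro m hm
    have h2 : (2 * m : ℝ) = 1 := by linarith
    have h3 : 2 * m = 1 := by exact_mod_cast h2
    omega)
  obtain ⟨K, hK, hb⟩ := bounded_of_tendsto h
  refine ⟨K, hK, fun n => ?_⟩
  have hp : (0:ℝ) < (n:ℝ) + 1 := by positivity
  have := hb n
  rw [neg_neg, abs_mul, abs_mul, abs_pow, abs_neg, abs_one, one_pow, one_mul,
    abs_of_pos (Real.rpow_pos_of_pos hp _), show (1 - -(1/2) : ℝ) = 3/2 by norm_num] at this
  rw [Real.rpow_neg hp.le, ← div_eq_mul_inv, le_div_iff₀ (Real.rpow_pos_of_pos hp _)]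
  exact this

theorem sC_bound : ∃ K : ℝ, 0 ≤ K ∧ ∀ n : ℕ,
    |coeff n sC| ≤ K * ((n:ℝ) + 1) ^ (-(3/2) : ℝ) := by
  obtain ⟨K, hK, hb⟩ := choose_half_bound
  refine ⟨K, hK, fun n => ?_⟩
  have h : coeff n sC = Ring.choose (1/2 : ℝ) (2 * n) := by
    simp [sC, PowerSeries.binomialSeries_coeff]
  rw [h]
  refine (hb _).trans ?_
  apply mul_le_mul_of_nonneg_left _ hK
  apply Real.rpow_le_rpow_of_nonpos (by positivity) _ (by norm_num)
  push_cast
  have : (0:ℝ) ≤ n := by positivity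
  linarith

theorem sU_bound : ∃ K : ℝ, 0 ≤ K ∧ ∀ n : ℕ,
    |coeff n sU| ≤ K * ((n:ℝ) + 1) ^ (-(3/2) : ℝ) := by
  obtain ⟨K, hK, hb⟩ := choose_half_bound
  refine ⟨K, hK, fun n => ?_⟩
  have h : |coeff n sU| = |Ring.choose (1/2 : ℝ) n| := by
    simp [sU, PowerSeries.binomialSeries_coeff, coeff_rescale, abs_mul]
  rw [h]; exact hb n

theorem abs_rescale_neg (f : ℝ⟦X⟧) (n : ℕ) : |coeff n (rescale (-1 : ℝ) f)| = |coeff n f| := by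
  rw [coeff_rescale, abs_mul, abs_pow, abs_neg, abs_one, one_pow, one_mul]

theorem summable_of_bound (f : ℝ⟦X⟧) (h : ∃ K : ℝ, 0 ≤ K ∧ ∀ n : ℕ,
    |coeff n f| ≤ K * ((n:ℝ) + 1) ^ (-(3/2) : ℝ)) : Summable (fun n => ‖coeff n f‖) := by
  obtain ⟨K, hK, hb⟩ := h
  have hs : Summable (fun k : ℕ => K * ((k:ℝ) + 1) ^ (-(3/2) : ℝ)) := by
    apply Summable.mul_left
    have := (summable_nat_add_iff 1).mpr ((Real.summable_nat_rpow (p := -(3/2))).mpr (by norm_num))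
    simpa using this
  exact Summable.of_nonneg_of_le (fun n => norm_nonneg _) hb hs

theorem tsum_sq (f : ℝ⟦X⟧) (h : Summable (fun n => ‖coeff n f‖)) :
    (∑' n, coeff n f) ^ 2 = ∑' n, coeff n (f ^ 2) := by
  rw [sq, tsum_mul_tsum_eq_tsum_sum_antidiagonal_of_summable_norm h h]
  apply tsum_congr
  intro n
  rw [sq, coeff_mul]

theorem tsum_one_add_X (a : ℝ) : ∑' n, coeff n (1 + PowerSeries.C a * X : ℝ⟦X⟧) = 1 + a := by
  rw [tsum_eq_sum (s := Finset.range 2)]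
  · simp [Finset.sum_range_succ, coeff_X, coeff_one]
  · intro n hn
    simp only [Finset.mem_range, not_lt] at hn
    have h0 : n ≠ 0 := by omega
    have h1 : n ≠ 1 := by omega
    simp [coeff_X, coeff_one, h0, h1]

theorem sC_value (f u : ℝ⟦X⟧) (hf : Summable (fun n => ‖coeff n f‖))
    (hu : Summable (fun n => ‖coeff n u‖)) (h : 2 * f ^ 2 = 1 + u) :
    2 * (∑' n, coeff n f) ^ 2 = 1 + ∑' n, coeff n u := by
  rw [tsum_sq f hf, ← tsum_mul_left]
  have e2 : (2 : ℝ⟦X⟧) = PowerSeries.C 2 := (map_ofNat PowerSeries.C 2).symm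
  have h1 : ∀ n, 2 * coeff n (f ^ 2) = coeff n (1 : ℝ⟦X⟧) + coeff n u := by
    intro n
    rw [← map_add, ← h, e2, coeff_C_mul]
  have hs1 : HasSum (fun n => coeff n (1 : ℝ⟦X⟧)) 1 := by
    have := hasSum_ite_eq 0 (1:ℝ)
    simpa [coeff_one] using this
  rw [tsum_congr h1, Summable.tsum_add hs1.summable hu.of_norm, hs1.tsum_eq]

theorem main_limit : ∃ C : ℝ, C ^ 2 = (1 + Real.sqrt 2) / 4 ∧
    Tendsto (fun n : ℕ => (slitTotal sqSteps n : ℝ) / 4 ^ n * ((n:ℝ) + 1) ^ (1/4 : ℝ)) atTop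
      (nhds (1 / Real.Gamma (3/4) * C)) := by
  have sU1 := summable_of_bound sU sU_bound
  have sC1 := summable_of_bound sC sC_bound
  have sU2 : Summable (fun n => ‖coeff n (rescale (-1 : ℝ) sU)‖) := by
    simpa only [Real.norm_eq_abs, abs_rescale_neg] using sU1
  have sC2 : Summable (fun n => ‖coeff n (rescale (-1 : ℝ) sC)‖) := by
    simpa only [Real.norm_eq_abs, abs_rescale_neg] using sC1
  have hq2 : (rescale (-1 : ℝ) sU) ^ 2 = 1 + PowerSeries.C 1 * X := by
    rw [← map_pow, sU_sq, map_sub, map_one, rescale_neg_one_X, map_one]; ring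
  have hU1 : (∑' n, coeff n sU) ^ 2 = 0 := by
    rw [tsum_sq _ sU1, sU_sq, show (1 - X : ℝ⟦X⟧) = 1 + PowerSeries.C (-1) * X by
      rw [map_neg, map_one]; ring, tsum_one_add_X]; norm_num
  have hU2 : (∑' n, coeff n (rescale (-1 : ℝ) sU)) ^ 2 = 2 := by
    rw [tsum_sq _ sU2, hq2, tsum_one_add_X]; norm_num
  have hC1 := sC_value _ _ sC1 sU1 sC_sq
  have hC2 := sC_value _ _ sC2 sU2 (by
    have := congrArg (fun f => rescale (-1 : ℝ) f) sC_sq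
    simpa only [map_mul, map_pow, map_add, map_one, map_ofNat] using this)
  rw [pow_eq_zero_iff two_ne_zero] at hU1
  rw [hU1] at hC1
  have hs2 : ∑' n, coeff n (rescale (-1 : ℝ) sU) = Real.sqrt 2 := by
    have h0 : (0:ℝ) ≤ 1 + ∑' n, coeff n (rescale (-1 : ℝ) sU) := by rw [← hC2]; positivity
    rcases sq_eq_sq_iff_eq_or_eq_neg.mp (hU2.trans (Real.sq_sqrt (zero_le_two)).symm) with h | h
    · exact h
    · rw [h] at h0
      have h1 : (1:ℝ) < Real.sqrt 2 := Real.lt_sqrt_of_sq_lt (by norm_num)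
      linarith
  rw [hs2] at hC2
  refine ⟨(∑' n, coeff n sC) * (∑' n, coeff n (rescale (-1 : ℝ) sC)), ?_, ?_⟩
  · rw [mul_pow]
    linear_combination (1/2) * (∑' n, coeff n (rescale (-1 : ℝ) sC)) ^ 2 * hC1 + (1/4) * hC2
  · have hd := tendsto_choose (3/4) (by
      intro m hm
      have : (0:ℝ) ≤ m := by positivity
      linarith)
    rw [show (1 - 3/4 : ℝ) = 1/4 by norm_num] at hd
    obtain ⟨K, hK, hb⟩ := sC_bound
    have l1 := conv_lemma (fun n => (-1) ^ n * Ring.choose (-(3/4) : ℝ) n) (fun n => coeff n sC) _ K hd hb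
    have l2 := conv_lemma _ (fun n => coeff n (rescale (-1 : ℝ) sC)) _ K l1 (by
      intro n; rw [abs_rescale_neg]; exact hb n)
    rw [mul_assoc] at l2
    refine l2.congr ?_
    intro n
    congr 1
    have h := congrArg (coeff n) slit_series
    rw [coeff_mk, coeff_rescale] at h
    rw [h, mul_div_cancel_left₀ _ (by positivity), coeff_mul]
    apply Finset.sum_congr rfl
    intro p _
    rw [coeff_mul]
    congr 1
    apply Finset.sum_congr rfl
    intro q _
    rw [coeff_rescale, PowerSeries.binomialSeries_coeff]
    simp


/-- `a(n) ∼ (√(1+√2)/(2Γ(3/4))) · 4ⁿ · n^{−1/4}` as `n → ∞`. -/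
theorem slit_plane_asymptotics :
    Tendsto (fun n : ℕ =>
        (slitTotal sqSteps n : ℝ) /
          (Real.sqrt (1 + Real.sqrt 2) / (2 * Real.Gamma (3/4))
            * 4 ^ n * (n : ℝ) ^ (-(1/4 : ℝ))))
      atTop (nhds 1) := by
  obtain ⟨C, hC, hl⟩ := main_limit
  have hG : 0 < Real.Gamma (3/4) := Real.Gamma_pos_of_pos (by norm_num)
  have hL : 0 ≤ 1 / Real.Gamma (3/4) * C := by
    refine ge_of_tendsto' hl ?_
    intro n; positivity
  have hC0 : 0 ≤ C := by
    have := mul_nonneg hG.le hL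
    rwa [← mul_assoc, mul_one_div_cancel hG.ne', one_mul] at this
  have hCv : C = Real.sqrt (1 + Real.sqrt 2) / 2 := by
    have h2 : C ^ 2 = (Real.sqrt (1 + Real.sqrt 2) / 2) ^ 2 := by
      rw [hC, div_pow, Real.sq_sqrt (by positivity)]; norm_num
    exact (sq_eq_sq₀ hC0 (by positivity)).mp h2
  have hCp : 0 < Real.sqrt (1 + Real.sqrt 2) := by positivity
  have h3 : Tendsto (fun n : ℕ => (((n:ℝ) + 1) / n) ^ (-(1/4) : ℝ)) atTop (nhds 1) := by
    rw [← tendsto_add_atTop_iff_nat 1]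
    have := tendsto_shift_ratio 1 (-(1/4))
    refine this.congr ?_
    intro n; push_cast; rfl
  have h4 := (hl.mul h3).mul_const (2 * Real.Gamma (3/4) / Real.sqrt (1 + Real.sqrt 2))
  have e : 1 / Real.Gamma (3/4) * C * 1 * (2 * Real.Gamma (3/4) / Real.sqrt (1 + Real.sqrt 2)) = 1 := by
    rw [hCv]; field_simp
  rw [e] at h4
  refine h4.congr' ?_
  filter_upwards [eventually_gt_atTop 0] with n hn
  have hn' : (0:ℝ) < n := by exact_mod_cast hn
  have hp : (0:ℝ) < (n:ℝ) + 1 := by positivity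
  rw [Real.div_rpow hp.le hn'.le, Real.rpow_neg hp.le, Real.rpow_neg hn'.le]
  have a1 : ((n:ℝ) + 1) ^ (1/4 : ℝ) ≠ 0 := (Real.rpow_pos_of_pos hp _).ne'
  have a2 : (n:ℝ) ^ (1/4 : ℝ) ≠ 0 := (Real.rpow_pos_of_pos hn' _).ne'
  field_simp
end

section
/- As n → ∞, the total number a(n) of n-step walks on the slit plane with diagonal steps satisfies a(n) ∼ (1 / (2^{1/4}·Γ(3/4))) · 4ⁿ · n^{−1/4}. -/
open Filter PowerSeries

/-- The four diagonal steps. -/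
def diagSteps : Set (ℤ × ℤ) := {(1,1), (1,-1), (-1,1), (-1,-1)}

namespace SlitAux

lemma exists_sqrt {A : Type*} [CommRing A] [Algebra ℚ A] (f : PowerSeries A)
    (hf : PowerSeries.constantCoeff f = 1) :
    ∃ r : PowerSeries A, r ^ 2 = f ∧ PowerSeries.constantCoeff r = 1 := by
  have h0 : PowerSeries.constantCoeff (f - 1) = 0 := by simp [hf]
  have hs : PowerSeries.HasSubst (f - 1) := PowerSeries.HasSubst.of_constantCoeff_zero' h0
  have hb : (PowerSeries.binomialSeries ℚ (1/2 : ℚ)) ^ 2 = 1 + PowerSeries.X := by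
    rw [pow_two, ← PowerSeries.binomialSeries_add]
    have := PowerSeries.binomialSeries_nat (R := ℚ) (A := ℚ) 1
    norm_num at this ⊢
    exact this
  refine ⟨PowerSeries.substAlgHom hs (PowerSeries.binomialSeries ℚ (1/2 : ℚ)), ?_, ?_⟩
  · rw [← map_pow, hb, map_add, map_one, PowerSeries.substAlgHom_X]
    ring
  · have := PowerSeries.constantCoeff_subst_eq_zero h0
      (PowerSeries.binomialSeries ℚ (1/2 : ℚ) - 1) (by simp)
    rw [PowerSeries.subst_sub hs, ← PowerSeries.coe_substAlgHom hs] at this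
    rw [map_one, map_sub] at this
    exact sub_eq_zero.1 this

lemma sq_unique {A : Type*} [CommRing A] [Algebra ℚ A] (a b : PowerSeries A)
    (ha : PowerSeries.constantCoeff a = 1) (hb : PowerSeries.constantCoeff b = 1)
    (h : a ^ 2 = b ^ 2) : a = b := by
  have hu : IsUnit (a + b) := by
    rw [PowerSeries.isUnit_iff_constantCoeff, map_add, ha, hb]
    have : (1 + 1 : A) = algebraMap ℚ A 2 := by
      rw [map_ofNat]; norm_num
    rw [this]
    exact (IsUnit.mk0 (2 : ℚ) (by norm_num)).map _
  have h1 : (a + b) * (a - b) = 0 := by linear_combination h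
  have := hu.mul_right_eq_zero.1 h1
  exact sub_eq_zero.1 this

lemma const_map {A B : Type*} [CommRing A] [CommRing B] (f : A →+* B) (p : PowerSeries A) :
    PowerSeries.constantCoeff (PowerSeries.map f p) = f (PowerSeries.constantCoeff p) := by
  rw [← PowerSeries.coeff_zero_eq_constantCoeff_apply, PowerSeries.coeff_map,
    PowerSeries.coeff_zero_eq_constantCoeff_apply]

/-- coefficients of (1-u)^{-α} -/
noncomputable def bc (α : ℝ) : ℕ → ℝ
  | 0 => 1
  | n + 1 => bc α n * ((n + α) / (n + 1))

noncomputable def bs (α : ℝ) : PowerSeries ℝ := PowerSeries.mk (bc α)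

lemma bs_deriv (α : ℝ) : (1 - PowerSeries.X) * PowerSeries.derivative ℝ (bs α) = 
    PowerSeries.C α * bs α := by
  ext n
  rw [sub_mul, one_mul, map_sub, PowerSeries.coeff_C_mul, PowerSeries.coeff_derivative]
  cases n with
  | zero => simp [bs, bc]
  | succ n =>
    rw [PowerSeries.coeff_succ_X_mul, PowerSeries.coeff_derivative]
    simp only [bs, PowerSeries.coeff_mk, bc]
    have : (n : ℝ) + 1 + 1 ≠ 0 := by positivity
    push_cast
    field_simp
    ring

lemma bs_const (α : ℝ) : PowerSeries.constantCoeff (bs α) = 1 := by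
  rw [← PowerSeries.coeff_zero_eq_constantCoeff_apply]; simp [bs, bc]

lemma bs_half : (bs (1/2)) ^ 2 * (1 - PowerSeries.X) = 1 := by
  apply PowerSeries.derivative.ext
  · have h := bs_deriv (1/2)
    have hC : (PowerSeries.C (1/2 : ℝ)) * 2 = 1 := by
      rw [← map_ofNat (PowerSeries.C (R := ℝ)) 2, ← map_mul]; norm_num
    simp only [Derivation.leibniz, Derivation.leibniz_pow, map_sub, PowerSeries.derivative_X,
      PowerSeries.derivative_one, smul_eq_mul, nsmul_eq_mul]
    push_cast
    linear_combination (2 * bs (1/2)) * h + (bs (1/2))^2 * hC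
  · simp [bs_const]

lemma bs_34 : (bs (3/4)) ^ 4 * (1 - PowerSeries.X) ^ 3 = 1 := by
  apply PowerSeries.derivative.ext
  · have h := bs_deriv (3/4)
    have hC : (PowerSeries.C (3/4 : ℝ)) * 4 = 3 := by
      rw [← map_ofNat (PowerSeries.C (R := ℝ)) 4, ← map_mul, ← map_ofNat (PowerSeries.C (R := ℝ)) 3]; norm_num
    simp only [Derivation.leibniz, Derivation.leibniz_pow, map_sub, PowerSeries.derivative_X,
      PowerSeries.derivative_one, smul_eq_mul, nsmul_eq_mul]
    push_cast
    linear_combination (4 * bs (3/4)^3 * (1 - PowerSeries.X)^2) * h + (bs (3/4))^4 * (1 - PowerSeries.X)^2 * hC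
  · simp [bs_const]

/-- `s = sqrt (1-u)` -/
noncomputable def ss : PowerSeries ℝ := (1 - PowerSeries.X) * bs (1/2)

lemma ss_sq : ss ^ 2 = 1 - PowerSeries.X := by
  unfold ss; linear_combination (1 - PowerSeries.X) * bs_half

lemma ss_const : PowerSeries.constantCoeff ss = 1 := by simp [ss, bs_const]

/-- `h = (1+s)/2` -/
noncomputable def hh : PowerSeries ℝ := PowerSeries.C (1/2) * (1 + ss)

lemma C_half : (PowerSeries.C (1/2 : ℝ)) * 2 = 1 := by
  rw [← map_ofNat (PowerSeries.C (R := ℝ)) 2, ← map_mul]; norm_num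

lemma two_hh : 2 * hh = 1 + ss := by unfold hh; linear_combination (1+ss) * C_half

lemma hh_const : PowerSeries.constantCoeff hh = 1 := by
  simp [hh, ss_const]; norm_num

lemma hh_eq : 4 * (hh * (1 - hh)) = PowerSeries.X := by
  linear_combination (2 - 2 * hh - (1 + ss)+ 2) * two_hh - ss_sq - 2 * two_hh

noncomputable def hi : PowerSeries ℝ := PowerSeries.invOfUnit hh 1

lemma hh_hi : hh * hi = 1 := PowerSeries.mul_invOfUnit _ _ (by simp [hh_const])

noncomputable def qq : PowerSeries ℝ := hi - 1

lemma qq_const : PowerSeries.constantCoeff qq = 0 := by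
  simp [qq, hi]

lemma exists_G : ∃ r : PowerSeries ℝ, r ^ 2 = hh ∧ PowerSeries.constantCoeff r = 1 :=
  exists_sqrt hh hh_const

noncomputable def GG : PowerSeries ℝ := exists_G.choose
lemma GG_sq : GG ^ 2 = hh := exists_G.choose_spec.1
lemma GG_const : PowerSeries.constantCoeff GG = 1 := exists_G.choose_spec.2

lemma exists_r : ∃ r : PowerSeries (Polynomial ℝ),
    r ^ 2 = 1 - PowerSeries.map Polynomial.C qq * PowerSeries.C (Polynomial.X ^ 2) ∧
      PowerSeries.constantCoeff r = 1 := by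
  apply exists_sqrt
  simp [const_map, qq_const]

noncomputable def rr : PowerSeries (Polynomial ℝ) := exists_r.choose
lemma rr_sq : rr ^ 2 = 1 - PowerSeries.map Polynomial.C qq * PowerSeries.C (Polynomial.X ^ 2) :=
  exists_r.choose_spec.1
lemma rr_const : PowerSeries.constantCoeff rr = 1 := exists_r.choose_spec.2

noncomputable def rho : PowerSeries (Polynomial ℝ) := PowerSeries.invOfUnit rr 1

lemma rr_rho : rr * rho = 1 := PowerSeries.mul_invOfUnit _ _ (by simp [rr_const])

lemma rho_zero : PowerSeries.map (Polynomial.evalRingHom (0:ℝ)) rho = 1 := by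
  have h1 : PowerSeries.map (Polynomial.evalRingHom (0:ℝ)) rr = 1 := by
    apply sq_unique
    · simp [const_map, rr_const]
    · simp
    · rw [← map_pow, rr_sq]
      simp
  have h2 := congrArg (PowerSeries.map (Polynomial.evalRingHom (0:ℝ))) rr_rho
  rw [map_mul, h1, one_mul, map_one] at h2
  exact h2

open LaurentPolynomial in
/-- the two specializations -/
noncomputable def ip : Polynomial ℝ →+* LaurentPolynomial ℝ := Polynomial.toLaurent
noncomputable def im : Polynomial ℝ →+* LaurentPolynomial ℝ :=
  (LaurentPolynomial.invert (R := ℝ)).toAlgHom.toRingHom.comp Polynomial.toLaurent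

noncomputable def LL : LaurentPolynomial ℝ :=
  LaurentPolynomial.C (1/2) * (LaurentPolynomial.T 1 + LaurentPolynomial.T (-1))

noncomputable def cL : PowerSeries ℝ →+* PowerSeries (LaurentPolynomial ℝ) :=
  PowerSeries.map LaurentPolynomial.C

noncomputable def beta : PowerSeries (LaurentPolynomial ℝ) :=
  cL hh * PowerSeries.map im rr

noncomputable def EE : PowerSeries (LaurentPolynomial ℝ) :=
  PowerSeries.rescale (LL ^ 2) (cL (bs (1/2)))

lemma EE_sq : EE ^ 2 * (1 - PowerSeries.C (LL ^ 2) * PowerSeries.X) = 1 := by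
  have := congrArg (fun f => PowerSeries.rescale (LL ^ 2) (cL f)) bs_half
  simpa [cL, EE, PowerSeries.rescale_X] using this

lemma LL_sq : 4 * LL ^ 2 = LaurentPolynomial.T 2 + 2 + LaurentPolynomial.T (-2) := by
  have h : (LaurentPolynomial.C (1/2 : ℝ)) * 2 = 1 := by
    rw [← map_ofNat (LaurentPolynomial.C (R := ℝ)) 2, ← map_mul]; norm_num
  have h1 : (LaurentPolynomial.T 1 : LaurentPolynomial ℝ) * LaurentPolynomial.T (-1) = 1 := by
    rw [← LaurentPolynomial.T_add]; simp
  have h2 : (LaurentPolynomial.T 1 : LaurentPolynomial ℝ) ^ 2 = LaurentPolynomial.T 2 := by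
    rw [LaurentPolynomial.T_pow]; simp
  have h3 : (LaurentPolynomial.T (-1) : LaurentPolynomial ℝ) ^ 2 = LaurentPolynomial.T (-2) := by
    rw [LaurentPolynomial.T_pow]; simp
  have h4 : (2 * LL) = LaurentPolynomial.T 1 + LaurentPolynomial.T (-1) := by
    unfold LL
    linear_combination (LaurentPolynomial.T 1 + LaurentPolynomial.T (-1)) * h
  have : 4 * LL ^ 2 = (2 * LL) ^ 2 := by ring
  rw [this, h4, ← h2, ← h3]
  linear_combination 2 * h1

lemma key_alg {A : Type*} [CommRing A] (E2 h q a b l x : A)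
    (e1 : 4 * (h * (1 - h)) = x) (e2 : h * (q + 1) = 1)
    (hL : 4 * l = a + 2 + b) (hT : a * b = 1) (hE : E2 * (1 - l * x) = 1) :
    E2 * (h ^ 2 * (1 - q * b)) * (1 - q * a) = 1 := by
  have e3 : h * q = 1 - h := by linear_combination e2
  have : h ^ 2 * (1 - q * b) * (1 - q * a) = h^2 + (h*q)^2 * (a * b) - h * (h * q) * (a + b) := by
    ring
  rw [← e1] at hE
  rw [mul_assoc, this, e3, hT]
  linear_combination hE + (E2 * h * (1 - h)) * hL

lemma key : EE * beta * PowerSeries.map ip rr = 1 := by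
  apply sq_unique
  · have : PowerSeries.constantCoeff EE = 1 := by
      rw [EE, ← PowerSeries.coeff_zero_eq_constantCoeff_apply, PowerSeries.coeff_rescale,
        PowerSeries.coeff_zero_eq_constantCoeff_apply, cL, const_map, bs_const]
      simp
    simp [this, beta, const_map, cL, hh_const, rr_const]
  · simp
  have hp : (PowerSeries.map ip rr) ^ 2 = 1 - cL qq * PowerSeries.C (LaurentPolynomial.T 2) := by
    rw [← map_pow, rr_sq]
    simp only [map_sub, map_mul, map_one, PowerSeries.map_C]
    congr 2
    · ext n; simp [PowerSeries.coeff_map, cL, ip]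
    · simp [ip]
  have hm : (PowerSeries.map im rr) ^ 2 = 1 - cL qq * PowerSeries.C (LaurentPolynomial.T (-2)) := by
    rw [← map_pow, rr_sq]
    simp only [map_sub, map_mul, map_one, PowerSeries.map_C]
    congr 2
    · ext n; simp [PowerSeries.coeff_map, cL, im]
    · simp [im]
  have e1 : 4 * (cL hh * (1 - cL hh)) = PowerSeries.X := by
    have := congrArg cL hh_eq
    rw [map_mul, map_mul, map_sub, map_one, map_ofNat] at this
    rw [this, cL, PowerSeries.map_X]
  have e2 : cL hh * (cL qq + 1) = 1 := by
    have : hh * (qq + 1) = 1 := by unfold qq; linear_combination hh_hi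
    have := congrArg cL this
    simpa [cL] using this
  have hL : 4 * PowerSeries.C (LL ^ 2) = PowerSeries.C (LaurentPolynomial.T 2) + 2 + PowerSeries.C (LaurentPolynomial.T (-2)) := by
    have := congrArg (PowerSeries.C (R := LaurentPolynomial ℝ)) LL_sq
    rw [map_mul, map_add, map_add, map_ofNat, map_ofNat] at this
    exact this
  have hT : PowerSeries.C (LaurentPolynomial.T 2 : LaurentPolynomial ℝ) * PowerSeries.C (LaurentPolynomial.T (-2)) = 1 := by
    rw [← map_mul, ← LaurentPolynomial.T_add]; simp
  have hE := EE_sq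
  rw [mul_pow, mul_pow, beta, mul_pow, hp, hm, one_pow]
  exact key_alg _ _ _ _ _ _ _ e1 e2 hL hT hE

/-- total series -/
noncomputable def FF : PowerSeries ℝ := hh * PowerSeries.map (Polynomial.evalRingHom (1:ℝ)) rr

lemma FF_const : PowerSeries.constantCoeff FF = 1 := by
  simp [FF, const_map, hh_const, rr_const]

lemma FF_sq : FF ^ 2 = ss * GG ^ 2 := by
  rw [FF, mul_pow, ← map_pow, rr_sq, GG_sq]
  have hq : PowerSeries.map (Polynomial.evalRingHom (1:ℝ)) (PowerSeries.map Polynomial.C qq) = qq := by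
    ext n; simp [PowerSeries.coeff_map]
  have : hh * (qq + 1) = 1 := by unfold qq; linear_combination hh_hi
  simp only [map_sub, map_mul, map_one, PowerSeries.map_C, hq]
  simp
  linear_combination - hh * this + hh * two_hh

lemma FF_eq : FF = (1 - PowerSeries.X) * (bs (3/4) * GG) := by
  apply sq_unique
  · exact FF_const
  · simp [bs_const, GG_const]
  apply sq_unique
  · simp [FF_const]
  · simp [bs_const, GG_const]
  rw [FF_sq]
  linear_combination GG^4 * ss_sq - (1 - PowerSeries.X) * GG^4 * bs_34

end SlitAux

namespace SlitAux

lemma coeff_mul_T (f : LaurentPolynomial ℝ) (m i : ℤ) :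
    (f * LaurentPolynomial.T m).coeff i = f.coeff (i - m) := by
  rw [LaurentPolynomial.T, AddMonoidAlgebra.coeff_mul_single_apply, mul_one, sub_eq_add_neg]

lemma coeff_LL_mul (f : LaurentPolynomial ℝ) (i : ℤ) :
    (f * LL).coeff i = (f.coeff (i - 1) + f.coeff (i + 1)) / 2 := by
  have h : f * LL = (1/2 : ℝ) • (f * LaurentPolynomial.T 1 + f * LaurentPolynomial.T (-1)) := by
    rw [LL, LaurentPolynomial.smul_eq_C_mul]; ring
  rw [h, AddMonoidAlgebra.coeff_smul, Finsupp.smul_apply, AddMonoidAlgebra.coeff_add, Finsupp.add_apply, coeff_mul_T, coeff_mul_T]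
  simp; ring

lemma LL_pow (n : ℕ) : LL ^ n = (1/2^n : ℝ) •
    ∑ m ∈ Finset.range (n+1), (n.choose m : ℝ) • LaurentPolynomial.T (2 * m - n : ℤ) := by
  rw [LL, mul_pow, add_pow, ← map_pow, ← LaurentPolynomial.smul_eq_C_mul]
  congr 1
  · simp
  · apply Finset.sum_congr rfl
    intro m hm
    have : m ≤ n := by simpa [Nat.lt_succ_iff] using hm
    rw [LaurentPolynomial.T_pow, LaurentPolynomial.T_pow, ← LaurentPolynomial.T_add, mul_comm, ← nsmul_eq_mul, Nat.cast_smul_eq_nsmul]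
    congr 2
    push_cast [this]
    ring

lemma coeff_LL_pow_zero (n : ℕ) : (LL ^ n).coeff 0 = (1/2^n : ℝ) *
    ∑ m ∈ Finset.range (n+1), (n.choose m : ℝ) * (if (2 * m : ℤ) - n = 0 then 1 else 0) := by
  rw [LL_pow]
  rw [AddMonoidAlgebra.coeff_smul, Finsupp.smul_apply, AddMonoidAlgebra.coeff_sum, Finsupp.finsetSum_apply, smul_eq_mul]
  congr 1
  apply Finset.sum_congr rfl
  intro m hm
  rw [AddMonoidAlgebra.coeff_smul, Finsupp.smul_apply, LaurentPolynomial.T_apply, smul_eq_mul]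

lemma LL_odd (n : ℕ) (h : n % 2 = 1) : (LL ^ n).coeff 0 = 0 := by
  rw [coeff_LL_pow_zero]
  apply mul_eq_zero_of_right
  apply Finset.sum_eq_zero
  intro m _
  rw [if_neg (by omega), mul_zero]

lemma bc_half (k : ℕ) : bc (1/2) k = k.centralBinom / 4 ^ k := by
  induction k with
  | zero => simp [bc]
  | succ k ih =>
    have h := Nat.succ_mul_centralBinom_succ k
    have h' : ((k:ℝ) + 1) * (k+1).centralBinom = 2 * (2 * k + 1) * k.centralBinom := by
      exact_mod_cast h
    rw [bc, ih]
    have : (k:ℝ) + 1 ≠ 0 := by positivity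
    field_simp
    rw [pow_succ]
    linear_combination (-2) * 4^k * h'

lemma LL_even (k : ℕ) : (LL ^ (2 * k)).coeff 0 = bc (1/2) k := by
  rw [coeff_LL_pow_zero, bc_half, Finset.sum_eq_single k]
  · simp [Nat.centralBinom, pow_mul]; norm_num; ring
  · intro b _ hb
    rw [if_neg (by push_cast; omega), mul_zero]
  · intro h; exact absurd (Finset.mem_range.2 (by omega)) h

lemma ip_coeff (f : Polynomial ℝ) (i : ℤ) : (ip f).coeff i = if 0 ≤ i then f.coeff i.toNat else 0 := by
  split_ifs with h
  · obtain ⟨n, rfl⟩ := Int.eq_ofNat_of_zero_le h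
    have := Finsupp.mapDomain_apply (f := (Nat.castEmbedding : ℕ ↪ ℤ)) (Nat.castEmbedding.injective) f.toFinsupp.coeff n
    rw [ip, LaurentPolynomial.coeff_toLaurent]
    exact this
  · rw [ip]
    by_contra hne
    have hmem := Finsupp.mem_support_iff.2 hne
    rw [LaurentPolynomial.support_coeff_toLaurent] at hmem
    simp only [Finset.mem_map] at hmem
    obtain ⟨a, _, ha⟩ := hmem
    apply h
    rw [← ha]; simp

lemma im_coeff (f : Polynomial ℝ) (i : ℤ) : (im f).coeff i = (ip f).coeff (-i) := by
  simp [im, ip]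

lemma beta_coeff (k : ℕ) (i : ℤ) (hi : 0 < i) : (PowerSeries.coeff k beta).coeff i = 0 := by
  rw [beta, PowerSeries.coeff_mul, AddMonoidAlgebra.coeff_sum, Finsupp.finsetSum_apply]
  apply Finset.sum_eq_zero
  intro x _
  rw [cL, PowerSeries.coeff_map, PowerSeries.coeff_map, ← LaurentPolynomial.smul_eq_C_mul,
    AddMonoidAlgebra.coeff_smul, Finsupp.smul_apply, im_coeff, ip_coeff, if_neg (by omega), smul_zero]

lemma beta_EE : beta * EE = PowerSeries.map ip rho := by
  have h := congrArg (PowerSeries.map ip) rr_rho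
  rw [map_mul, map_one] at h
  linear_combination (PowerSeries.map ip rho) * key - EE * beta * h

noncomputable def SS (n : ℕ) (i j : ℤ) : ℝ :=
  ∑ k ∈ Finset.range (n/2+1),
    (PowerSeries.coeff k beta * LL ^ (n - 2 * k)).coeff i * (LL ^ (n - 2 * k)).coeff j

lemma SS_succ (n : ℕ) (i j : ℤ) (h : j = 0 → 0 < i) :
    SS (n+1) i j = (SS n (i-1) (j-1) + SS n (i-1) (j+1) + SS n (i+1) (j-1) + SS n (i+1) (j+1)) / 4 := by
  have h1 : ∑ k ∈ Finset.range (n/2+1),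
    (PowerSeries.coeff k beta * LL ^ (n + 1 - 2 * k)).coeff i * (LL ^ (n + 1 - 2 * k)).coeff j =
     (SS n (i-1) (j-1) + SS n (i-1) (j+1) + SS n (i+1) (j-1) + SS n (i+1) (j+1)) / 4 := by
    unfold SS
    rw [← Finset.sum_add_distrib, ← Finset.sum_add_distrib, ← Finset.sum_add_distrib, Finset.sum_div]
    apply Finset.sum_congr rfl
    intro k hk
    have hk' := Finset.mem_range.1 hk
    have e : n + 1 - 2 * k = (n - 2 * k) + 1 := by omega
    rw [e, pow_succ, ← mul_assoc, coeff_LL_mul, coeff_LL_mul]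
    ring
  rw [← h1]
  unfold SS
  rcases Nat.even_or_odd' n with ⟨m, rfl | rfl⟩
  · have : (2 * m + 1) / 2 = 2 * m / 2 := by omega
    rw [this]
  · have : (2 * m + 1 + 1) / 2 = (2 * m + 1) / 2 + 1 := by omega
    rw [this, Finset.sum_range_succ]
    have e : 2 * m + 1 + 1 - 2 * ((2 * m + 1) / 2 + 1) = 0 := by omega
    rw [e, pow_zero, mul_one]
    simp only [add_eq_left, mul_eq_zero]
    by_cases hj : j = 0
    · left; exact beta_coeff _ _ (h hj)
    · right
      rw [← LaurentPolynomial.T_zero, LaurentPolynomial.T_apply, if_neg (Ne.symm hj)]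

lemma SS_H (n : ℕ) (i : ℤ) (h : i ≤ 0) : SS n i 0 = if n = 0 ∧ i = 0 then 1 else 0 := by
  rcases Nat.even_or_odd' n with ⟨m, rfl | rfl⟩
  · have h1 : SS (2 * m) i 0 = (PowerSeries.coeff m (beta * EE)).coeff i := by
      rw [PowerSeries.coeff_mul, Finset.Nat.sum_antidiagonal_eq_sum_range_succ_mk, AddMonoidAlgebra.coeff_sum, Finsupp.finsetSum_apply]
      unfold SS
      rw [show 2 * m / 2 = m by omega]
      apply Finset.sum_congr rfl
      intro k hk
      have hk' := Finset.mem_range.1 hk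
      rw [show 2 * m - 2 * k = 2 * (m - k) by omega, LL_even]
      simp only [EE, PowerSeries.coeff_rescale, cL, PowerSeries.coeff_map, bs, PowerSeries.coeff_mk]
      rw [← mul_assoc, ← pow_mul, mul_comm _ (LaurentPolynomial.C _), ← LaurentPolynomial.smul_eq_C_mul,
        AddMonoidAlgebra.coeff_smul, Finsupp.smul_apply, smul_eq_mul, mul_comm]
    rw [h1, beta_EE, PowerSeries.coeff_map, ip_coeff]
    by_cases hi : i = 0
    · subst hi
      have := congrArg (PowerSeries.coeff m) rho_zero
      rw [PowerSeries.coeff_map, PowerSeries.coeff_one] at this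
      simp [← Polynomial.coeff_zero_eq_eval_zero] at this
      simp [this]
    · rw [if_neg (by omega), if_neg (by tauto)]
  · rw [if_neg (by omega)]
    apply Finset.sum_eq_zero
    intro k hk
    have hk' := Finset.mem_range.1 hk
    rw [LL_odd (2 * m + 1 - 2 * k) (by omega), mul_zero]

noncomputable def ev1 : LaurentPolynomial ℝ →+* ℝ := LaurentPolynomial.eval₂ (RingHom.id ℝ) 1

lemma ev1_eq (f : LaurentPolynomial ℝ) (I : Finset ℤ) (hI : f.coeff.support ⊆ I) :
    ev1 f = ∑ i ∈ I, f.coeff i := by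
  have h : ev1 f = f.coeff.sum (fun _ r => r) := by
    clear hI
    induction f using LaurentPolynomial.induction_on' with
    | add p q hp hq =>
      rw [map_add, hp, hq, AddMonoidAlgebra.coeff_add, Finsupp.sum_add_index'] <;> simp
    | C_mul_T n a =>
      rw [← LaurentPolynomial.single_eq_C_mul_T]
      rw [LaurentPolynomial.single_eq_C_mul_T, ev1, LaurentPolynomial.eval₂_C_mul_T,
        ← LaurentPolynomial.single_eq_C_mul_T, AddMonoidAlgebra.coeff_single,
        Finsupp.sum_single_index rfl]
      simp
  rw [h, Finsupp.sum_of_support_subset _ hI _ (by simp)]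

lemma ev1_LL : ev1 LL = 1 := by
  rw [LL, map_mul, map_add, ev1, LaurentPolynomial.eval₂_T, LaurentPolynomial.eval₂_T,
    LaurentPolynomial.eval₂_C]
  norm_num

lemma ev1_beta (k : ℕ) : ev1 (PowerSeries.coeff k beta) = PowerSeries.coeff k FF := by
  rw [← PowerSeries.coeff_map]
  congr 1
  rw [beta, FF, map_mul]
  congr 1
  · ext n; simp [PowerSeries.coeff_map, cL, ev1]
  · rw [← RingHom.comp_apply, ← PowerSeries.map_comp]
    congr 2
    apply Polynomial.ringHom_ext
    · intro a; simp [im, ev1]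
    · simp [im, ev1]

lemma SS_sum (n : ℕ) (I0 J0 : Finset ℤ) : ∃ I J : Finset ℤ, I0 ⊆ I ∧ J0 ⊆ J ∧
    ∑ p ∈ I ×ˢ J, SS n p.1 p.2 = ∑ k ∈ Finset.range (n/2+1), PowerSeries.coeff k FF := by
  refine ⟨I0 ∪ (Finset.range (n/2+1)).biUnion
      (fun k => (PowerSeries.coeff k beta * LL ^ (n - 2 * k)).coeff.support), 
    J0 ∪ (Finset.range (n/2+1)).biUnion (fun k => (LL ^ (n - 2 * k)).coeff.support),
    Finset.subset_union_left, Finset.subset_union_left, ?_⟩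
  unfold SS
  rw [Finset.sum_comm]
  apply Finset.sum_congr rfl
  intro k hk
  rw [← ev1_beta]
  rw [Finset.sum_product]
  simp_rw [← Finset.mul_sum]
  rw [← Finset.sum_mul, ← ev1_eq, ← ev1_eq]
  · simp [ev1_LL]
  · intro x hx
    exact Finset.mem_union_right _ (Finset.mem_biUnion.2 ⟨k, hk, hx⟩)
  · intro x hx
    exact Finset.mem_union_right _ (Finset.mem_biUnion.2 ⟨k, hk, hx⟩)

end SlitAux

namespace SlitAux

abbrev WW (n : ℕ) : Type := {w : Fin (n+1) → ℤ × ℤ // IsSlitWalk diagSteps n w}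
abbrev WP (n : ℕ) (p : ℤ × ℤ) : Type := {w : WW n // w.1 (Fin.last n) = p}

instance steps_finite : Finite diagSteps := by
  unfold diagSteps
  exact Set.Finite.to_subtype (by simp)

instance WW_finite (n : ℕ) : Finite (WW n) := by
  let f : WW n → (Fin n → diagSteps) := fun w m => ⟨_, w.2.2.1 m⟩
  apply Finite.of_injective f
  intro v w h
  apply Subtype.ext
  funext i
  induction i using Fin.induction with
  | zero => rw [v.2.1, w.2.1]
  | succ m ih =>
    have := congrArg Subtype.val (congrFun h m)
    simp only [f] at this
    rw [ih] at this
    exact sub_left_inj.1 this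

lemma snoc_walk {n : ℕ} {w : Fin (n+1) → ℤ × ℤ} (hw : IsSlitWalk diagSteps n w) (p : ℤ × ℤ)
    (hp : p ∉ slitH) (hs : p - w (Fin.last n) ∈ diagSteps) :
    IsSlitWalk diagSteps (n+1) (Fin.snoc (α := fun _ => ℤ × ℤ) w p) := by
  refine ⟨?_, ?_, ?_⟩
  · have : (0 : Fin (n+1+1)) = Fin.castSucc 0 := rfl
    rw [this, Fin.snoc_castSucc, hw.1]
  · intro m
    induction m using Fin.lastCases with
    | last => rw [Fin.succ_last, Fin.snoc_last, Fin.snoc_castSucc]; exact hs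
    | cast m =>
      rw [Fin.succ_castSucc, Fin.snoc_castSucc, Fin.snoc_castSucc]
      exact hw.2.1 m
  · intro m hm
    induction m using Fin.lastCases with
    | last => rw [Fin.snoc_last]; exact hp
    | cast m =>
      rw [Fin.snoc_castSucc]
      exact hw.2.2 m hm

lemma init_walk {n : ℕ} {w : Fin (n+1+1) → ℤ × ℤ} (hw : IsSlitWalk diagSteps (n+1) w) :
    IsSlitWalk diagSteps n (fun i => w i.castSucc) :=
  ⟨hw.1, fun m => hw.2.1 m.castSucc, fun m hm => hw.2.2 m.castSucc hm⟩

lemma sigma_inj (n : ℕ) (p : ℤ × ℤ) (x y : Σ s : diagSteps, WP n (p - s.1))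
    (h : x.2.1 = y.2.1) : x = y := by
  obtain ⟨⟨s, hs⟩, ⟨w, hw⟩⟩ := x
  obtain ⟨⟨s', hs'⟩, ⟨w', hw'⟩⟩ := y
  simp only at h hw hw'
  subst h
  have : s = s' := by
    rw [hw] at hw'
    exact sub_right_inj.1 hw'
  subst this
  rfl

def stepEquiv (n : ℕ) (p : ℤ × ℤ) (hp : p ∉ slitH) :
    WP (n+1) p ≃ Σ s : diagSteps, WP n (p - s.1) where
  toFun w := ⟨⟨p - w.1.1 (Fin.last n).castSucc, by
      have := w.1.2.2.1 (Fin.last n)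
      rw [Fin.succ_last, w.2] at this
      exact this⟩, ⟨⟨_, init_walk w.1.2⟩, by simp⟩⟩
  invFun x := ⟨⟨_, snoc_walk x.2.1.2 p hp (by rw [x.2.2]; simp [x.1.2])⟩, by simp⟩
  left_inv w := by
    apply Subtype.ext
    apply Subtype.ext
    funext i
    induction i using Fin.lastCases with
    | last => simp [w.2]
    | cast m => simp
  right_inv x := by
    apply sigma_inj
    apply Subtype.ext
    funext i
    simp

noncomputable def NN (n : ℕ) (p : ℤ × ℤ) : ℕ := Nat.card (WP n p)

lemma NN_succ (n : ℕ) (i j : ℤ) (h : (i, j) ∉ slitH) : NN (n+1) (i,j) =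
    NN n (i-1,j-1) + NN n (i-1,j+1) + NN n (i+1,j-1) + NN n (i+1,j+1) := by
  have := Fintype.ofFinite diagSteps
  unfold NN
  rw [Nat.card_congr (stepEquiv n _ h), Nat.card_sigma]
  have e := Finset.sum_subtype ({(1,1),(1,-1),(-1,1),(-1,-1)} : Finset (ℤ × ℤ)) (p := fun x => x ∈ diagSteps) (F := this)
     (by intro x; simp [diagSteps]) (fun s => Nat.card (WP n ((i,j) - s)))
  rw [← e]
  simp [add_assoc]

lemma NN_H (n : ℕ) (p : ℤ × ℤ) (h : p ∈ slitH) : NN (n+1) p = 0 := by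
  unfold NN
  have : IsEmpty (WP (n+1) p) := ⟨fun w => w.1.2.2.2 (Fin.last _) (by simp) (by rw [w.2]; exact h)⟩
  simp

lemma NN_zero (p : ℤ × ℤ) : NN 0 p = if p = (0,0) then 1 else 0 := by
  unfold NN
  split_ifs with h
  · subst h
    rw [Nat.card_eq_one_iff_unique]
    refine ⟨⟨fun v w => ?_⟩, ⟨⟨⟨fun _ => (0,0), rfl, fun m => m.elim0, fun m hm => ?_⟩, rfl⟩⟩⟩
    · apply Subtype.ext; apply Subtype.ext; funext i
      rw [show i = 0 from Fin.ext (by omega), v.1.2.1, w.1.2.1]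
    · have := m.2; omega
  · have : IsEmpty (WP 0 p) := ⟨fun w => h (by rw [← w.2]; exact w.1.2.1)⟩
    simp

lemma NN_eq (n : ℕ) (i j : ℤ) : (NN n (i,j) : ℝ) = 4 ^ n * SS n i j := by
  induction n generalizing i j with
  | zero =>
    rw [NN_zero]
    by_cases hj : j = 0
    · subst hj
      by_cases hi : i ≤ 0
      · rw [SS_H _ _ hi]; by_cases h0 : i = 0 <;> simp [h0]
      · rw [if_neg (by simp; omega)]
        simp [SS]
        have := (beta_coeff 0 i (by omega)).symm
        rwa [PowerSeries.coeff_zero_eq_constantCoeff_apply] at this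
    · rw [if_neg (by simp [hj])]
      have : (1 : LaurentPolynomial ℝ).coeff j = 0 := by
        rw [← LaurentPolynomial.T_zero, LaurentPolynomial.T_apply, if_neg (Ne.symm hj)]
      simp [SS, this]
  | succ n ih =>
    by_cases h : (i, j) ∈ slitH
    · rw [NN_H _ _ h]
      obtain ⟨h1, h2⟩ := h
      simp only at h1 h2
      subst h1
      rw [SS_H _ _ h2]; simp
    · rw [NN_succ _ _ _ h, SS_succ]
      · push_cast
        rw [ih, ih, ih, ih]; ring
      · intro hj
        by_contra hi
        exact h ⟨hj, not_lt.1 hi⟩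

lemma total_eq (n : ℕ) : (slitTotal diagSteps n : ℝ) =
    4 ^ n * ∑ k ∈ Finset.range (n/2+1), PowerSeries.coeff k FF := by
  classical
  have := Fintype.ofFinite (WW n)
  obtain ⟨I, J, hI, hJ, h⟩ := SS_sum n
    (Finset.univ.image (fun w : WW n => (w.1 (Fin.last n)).1))
    (Finset.univ.image (fun w : WW n => (w.1 (Fin.last n)).2))
  rw [← h, Finset.mul_sum]
  have h1 : slitTotal diagSteps n = ∑ p ∈ I ×ˢ J, NN n p := by
    unfold slitTotal NN
    rw [Nat.card_eq_fintype_card, ← Finset.card_univ, Finset.card_eq_sum_card_fiberwise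
      (f := fun w : WW n => w.1 (Fin.last n)) (t := I ×ˢ J)]
    · apply Finset.sum_congr rfl
      intro p _
      rw [Nat.card_eq_fintype_card, Fintype.card_subtype]
    · intro w _
      exact Finset.mem_coe.2 (Finset.mem_product.2 ⟨hI (Finset.mem_image_of_mem _ (Finset.mem_univ w)), hJ (Finset.mem_image_of_mem _ (Finset.mem_univ w))⟩)
  rw [h1]
  push_cast
  apply Finset.sum_congr rfl
  rintro ⟨i, j⟩ _
  exact NN_eq n i j

end SlitAux

namespace SlitAux

lemma partial_sum (P : PowerSeries ℝ) (m : ℕ) :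
    ∑ k ∈ Finset.range (m+1), PowerSeries.coeff k ((1 - PowerSeries.X) * P) =
      PowerSeries.coeff m P := by
  induction m with
  | zero => simp
  | succ m ih =>
    rw [Finset.sum_range_succ, ih, sub_mul, one_mul, map_sub, PowerSeries.coeff_succ_X_mul]
    ring

noncomputable def pp (m : ℕ) : ℝ := PowerSeries.coeff m (bs (3/4) * GG)

lemma total_pp (n : ℕ) : (slitTotal diagSteps n : ℝ) = 4 ^ n * pp (n/2) := by
  rw [total_eq, FF_eq, partial_sum, pp]

lemma pp_nonneg (m : ℕ) : 0 ≤ pp m := by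
  have h := total_pp (2 * m)
  rw [show 2 * m / 2 = m by omega] at h
  have h1 : (0:ℝ) ≤ 4 ^ (2 * m) * pp m := by rw [← h]; positivity
  exact nonneg_of_mul_nonneg_right h1 (by positivity)

noncomputable def gc (k : ℕ) : ℝ := PowerSeries.coeff k GG

lemma gc_zero : gc 0 = 1 := by
  rw [gc, PowerSeries.coeff_zero_eq_constantCoeff_apply, GG_const]

lemma ode_alg {A : Type*} [CommRing A] (x s s1 G G1 G2 : A) (h1 : s ^ 2 = 1 - x)
    (h2 : 2 * G ^ 2 = 1 + s) (h3 : 2 * s * s1 = -1) (h4 : 4 * G * G1 = s1)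
    (h5 : s1 * G * G1 + s * G1 ^ 2 + s * G * G2 = 0) :
    4 * G ^ 3 * (x * (16 * G2) - x * (x * (16 * G2)) + 8 * G1 - x * (16 * G1) + G) = 0 := by
  have h6 : 8 * s * G * G1 = -1 := by linear_combination 2 * s * h4 + h3
  have a : -(G * G1) + 2 * (1 - x) * (G1 ^ 2 + G * G2) = 0 := by
    linear_combination 2 * s * h5 - G * G1 * h3 - 2 * (G1 ^ 2 + G * G2) * h1
  have b : 8 * (1 - x) * G * G1 = - s := by
    linear_combination s * h6 - 8 * G * G1 * h1
  have c : 64 * (1 - x) * G1 ^ 2 * G ^ 2 = 1 := by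
    linear_combination (8 * s * G * G1 - 1) * h6 - 64 * G1 ^ 2 * G ^ 2 * h1
  linear_combination 32 * x * G ^ 2 * a + 4 * G ^ 2 * b - x * c + (2 * G ^ 2 + 1 + s - 2 * s) * h2
    - h1

lemma ode : PowerSeries.X * (16 * PowerSeries.derivative ℝ (PowerSeries.derivative ℝ GG))
    - PowerSeries.X * (PowerSeries.X * (16 * PowerSeries.derivative ℝ (PowerSeries.derivative ℝ GG)))
    + 8 * PowerSeries.derivative ℝ GG - PowerSeries.X * (16 * PowerSeries.derivative ℝ GG) + GG = 0 := by
  have d2 : PowerSeries.derivative ℝ (2 : PowerSeries ℝ) = 0 := by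
    rw [← map_ofNat (PowerSeries.C (R := ℝ)) 2, PowerSeries.derivative_C]
  have d4 : PowerSeries.derivative ℝ (4 : PowerSeries ℝ) = 0 := by
    rw [← map_ofNat (PowerSeries.C (R := ℝ)) 4, PowerSeries.derivative_C]
  have h2 : 2 * GG ^ 2 = 1 + ss := by rw [GG_sq, two_hh]
  have h3 : 2 * ss * PowerSeries.derivative ℝ ss = -1 := by
    have := congrArg (PowerSeries.derivative ℝ) ss_sq
    simp only [Derivation.leibniz_pow, map_sub, PowerSeries.derivative_X,
      PowerSeries.derivative_one, smul_eq_mul, nsmul_eq_mul] at this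
    push_cast at this
    linear_combination this
  have h4 : 4 * GG * PowerSeries.derivative ℝ GG = PowerSeries.derivative ℝ ss := by
    have := congrArg (PowerSeries.derivative ℝ) h2
    simp only [Derivation.leibniz, Derivation.leibniz_pow, map_add, d2,
      PowerSeries.derivative_one, smul_eq_mul, nsmul_eq_mul] at this
    push_cast at this
    linear_combination this
  have h6 : ss * GG * PowerSeries.derivative ℝ GG * 8 = -1 := by
    linear_combination 2 * ss * h4 + h3
  have d8 : PowerSeries.derivative ℝ (8 : PowerSeries ℝ) = 0 := by
    rw [← map_ofNat (PowerSeries.C (R := ℝ)) 8, PowerSeries.derivative_C]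
  have h5 := congrArg (PowerSeries.derivative ℝ) h6
  simp only [Derivation.leibniz, map_neg, d8, PowerSeries.derivative_one, smul_eq_mul] at h5
  have e8 : (8 : PowerSeries ℝ) ≠ 0 := by
    intro h
    have := congrArg PowerSeries.constantCoeff h
    rw [map_ofNat] at this
    norm_num at this
  have h5' : PowerSeries.derivative ℝ ss * GG * PowerSeries.derivative ℝ GG
      + ss * (PowerSeries.derivative ℝ GG) ^ 2
      + ss * GG * PowerSeries.derivative ℝ (PowerSeries.derivative ℝ GG) = 0 := by
    apply mul_left_cancel₀ e8
    linear_combination h5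
  have := ode_alg _ _ _ _ _ _ ss_sq h2 h3 h4 h5'
  have hne : 4 * GG ^ 3 ≠ 0 := by
    intro h
    have := congrArg PowerSeries.constantCoeff h
    rw [map_mul, map_ofNat, map_pow, GG_const] at this
    norm_num at this
  exact (mul_eq_zero.1 this).resolve_left hne

lemma gc_rec (n : ℕ) : ((n:ℝ) + 1) * (16 * n + 8) * gc (n+1) = (16 * n ^ 2 - 1) * gc n := by
  have h := congrArg (PowerSeries.coeff n) ode
  have e8 : (8 : PowerSeries ℝ) = PowerSeries.C 8 := (map_ofNat _ 8).symm
  have e16 : (16 : PowerSeries ℝ) = PowerSeries.C 16 := (map_ofNat _ 16).symm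
  rw [e8, e16] at h
  simp only [map_add, map_sub, map_zero] at h
  rcases n with _ | _ | n
  · simp only [PowerSeries.coeff_zero_X_mul, PowerSeries.coeff_C_mul, PowerSeries.coeff_derivative] at h
    simp only [gc]
    push_cast at h ⊢
    linear_combination h
  · simp only [PowerSeries.coeff_succ_X_mul, PowerSeries.coeff_zero_X_mul, PowerSeries.coeff_C_mul, PowerSeries.coeff_derivative] at h
    simp only [gc]
    push_cast at h ⊢
    linear_combination h
  · simp only [PowerSeries.coeff_succ_X_mul, PowerSeries.coeff_C_mul, PowerSeries.coeff_derivative] at h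
    simp only [gc]
    push_cast at h ⊢
    linear_combination h

lemma gc_sq (n : ℕ) : ((n:ℝ) + 1) ^ 3 * gc n ^ 2 ≤ 1 := by
  induction n with
  | zero => simp [gc_zero]
  | succ n ih =>
    have h := gc_rec n
    have hpos : (0:ℝ) < ((n:ℝ) + 1) * (16 * n + 8) := by positivity
    have h1 : gc (n+1) = (16 * n ^ 2 - 1) * gc n / (((n:ℝ) + 1) * (16 * n + 8)) := by
      rw [eq_div_iff hpos.ne', ← h]; ring
    refine le_trans ?_ ih
    rw [h1, div_pow, mul_pow, ← mul_div_assoc, div_le_iff₀ (by positivity)]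
    have hn : (0:ℝ) ≤ n := by positivity
    push_cast
    have key : ((n:ℝ) + 1 + 1) ^ 3 * (16 * n ^ 2 - 1) ^ 2 ≤ (n + 1) ^ 3 * (((n:ℝ) + 1) * (16 * n + 8)) ^ 2 := by
      have : 0 ≤ (n + 1) ^ 3 * (((n:ℝ) + 1) * (16 * n + 8)) ^ 2 - ((n:ℝ) + 1 + 1) ^ 3 * (16 * n ^ 2 - 1) ^ 2 := by
        ring_nf; positivity
      linarith
    nlinarith [sq_nonneg (gc n), mul_le_mul_of_nonneg_right key (sq_nonneg (gc n))]

lemma bc_pos (n : ℕ) : 0 < bc (3/4) n := by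
  induction n with
  | zero => simp [bc]
  | succ n ih => rw [bc]; positivity

lemma bc_four (n : ℕ) : bc (3/4) n ^ 4 * ((n:ℝ) + 1) ≤ 1 := by
  induction n with
  | zero => simp [bc]
  | succ n ih =>
    refine le_trans ?_ ih
    rw [bc, mul_pow, mul_assoc]
    apply mul_le_mul_of_nonneg_left _ (by have := bc_pos n; positivity)
    rw [div_pow, div_mul_eq_mul_div, div_le_iff₀ (by positivity)]
    push_cast
    have : 0 ≤ ((n:ℝ) + 1) * (n + 1) ^ 4 - ((n:ℝ) + 3/4) ^ 4 * (n + 1 + 1) := by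
      ring_nf; positivity
    linarith

lemma bc_le (n : ℕ) : bc (3/4) n * ((n:ℝ) + 1) ^ (1/4 : ℝ) ≤ 1 := by
  have h := bc_four n
  have hp := bc_pos n
  have h1 : (bc (3/4) n * ((n:ℝ) + 1) ^ (1/4 : ℝ)) ^ 4 ≤ 1 := by
    rw [mul_pow, ← Real.rpow_natCast (((n:ℝ) + 1) ^ (1/4 : ℝ)), ← Real.rpow_mul (by positivity)]
    norm_num
    exact h
  exact (pow_le_one_iff_of_nonneg (by positivity) (by norm_num)).1 h1

lemma gc_le (n : ℕ) : |gc n| ≤ ((n:ℝ) + 1) ^ (-(3/2) : ℝ) := by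
  have h := gc_sq n
  apply abs_le_of_sq_le_sq _ (by positivity)
  rw [← Real.rpow_natCast (((n:ℝ) + 1) ^ (-(3/2) : ℝ)), ← Real.rpow_mul (by positivity)]
  have : (-(3/2) * ((2:ℕ):ℝ)) = -((3:ℕ):ℝ) := by norm_num
  rw [this, Real.rpow_neg (by positivity), Real.rpow_natCast, ← one_div, le_div_iff₀ (by positivity)]
  linarith

lemma summable_shift (a : ℝ) (ha : a < -1) : Summable (fun n : ℕ => ((n:ℝ) + 1) ^ a) := by
  have := (summable_nat_add_iff 1).2 (Real.summable_nat_rpow.2 ha)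
  simpa using this

lemma gc_summable : Summable (fun n => ‖gc n‖) :=
  Summable.of_nonneg_of_le (fun _ => norm_nonneg _) (fun n => gc_le n)
    (summable_shift _ (by norm_num))

/-- absolutely summable coefficients, with given sum -/
def AS (f : PowerSeries ℝ) (σ : ℝ) : Prop :=
  Summable (fun n => ‖PowerSeries.coeff n f‖) ∧ ∑' n, PowerSeries.coeff n f = σ

lemma seq_conv (a b : ℕ → ℝ) (ha : Summable fun n => ‖a n‖) (hb : Summable fun n => ‖b n‖) :
    (Summable fun n => ‖∑ p ∈ Finset.HasAntidiagonal.antidiagonal n, a p.1 * b p.2‖) ∧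
    ∑' n, ∑ p ∈ Finset.HasAntidiagonal.antidiagonal n, a p.1 * b p.2 = (∑' n, a n) * ∑' n, b n :=
  ⟨summable_norm_sum_mul_antidiagonal_of_summable_norm ha hb,
    (tsum_mul_tsum_eq_tsum_sum_antidiagonal_of_summable_norm ha hb).symm⟩

lemma AS.mul {f g : PowerSeries ℝ} {a b : ℝ} (hf : AS f a) (hg : AS g b) : AS (f * g) (a * b) := by
  have h := seq_conv (fun n => PowerSeries.coeff n f) (fun n => PowerSeries.coeff n g) hf.1 hg.1
  have e : (fun n => PowerSeries.coeff n (f * g)) = fun n => ∑ p ∈ Finset.HasAntidiagonal.antidiagonal n,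
      PowerSeries.coeff p.1 f * PowerSeries.coeff p.2 g :=
    funext fun n => PowerSeries.coeff_mul n f g
  have h1 : ∑' n, PowerSeries.coeff n f = a := hf.2
  have h2 : ∑' n, PowerSeries.coeff n g = b := hg.2
  constructor
  · have h3 := h.1
    refine h3.congr fun n => ?_
    rw [congrFun e n]
  · rw [← h1, ← h2]
    exact (tsum_congr fun n => congrFun e n).trans h.2

lemma AS.add {f g : PowerSeries ℝ} {a b : ℝ} (hf : AS f a) (hg : AS g b) : AS (f + g) (a + b) := by
  constructor
  · simp_rw [map_add]
    exact Summable.of_nonneg_of_le (fun _ => norm_nonneg _) (fun n => norm_add_le _ _) (hf.1.add hg.1)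
  · simp_rw [map_add]
    rw [hf.1.of_norm.tsum_add hg.1.of_norm, hf.2, hg.2]

lemma AS_C (c : ℝ) : AS (PowerSeries.C c) c := by
  constructor
  · apply summable_of_ne_finset_zero (s := {0})
    intro b hb
    simp at hb
    simp [PowerSeries.coeff_C, hb]
  · rw [tsum_eq_single 0]
    · simp
    · intro b hb; simp [PowerSeries.coeff_C, hb]

lemma AS_X : AS PowerSeries.X 1 := by
  constructor
  · apply summable_of_ne_finset_zero (s := {1})
    intro b hb
    simp at hb
    simp [PowerSeries.coeff_X, hb]
  · rw [tsum_eq_single 1]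
    · simp
    · intro b hb; simp [PowerSeries.coeff_X, hb]

lemma AS.unique {f : PowerSeries ℝ} {a b : ℝ} (h : AS f a) (h' : AS f b) : a = b := by
  rw [← h.2, h'.2]

noncomputable def TT : ℝ := ∑' n, gc n

lemma TT_sq : TT ^ 2 = 1 / 2 := by
  have hG : AS GG TT := ⟨gc_summable, rfl⟩
  have hs : AS ss (2 * (TT * TT) + (-1)) := by
    have := ((AS_C 2).mul (hG.mul hG)).add (AS_C (-1))
    convert this using 1
    have e : (PowerSeries.C (2:ℝ)) = 2 := map_ofNat _ 2
    rw [e, map_neg, map_one]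
    linear_combination -two_hh - 2 * GG_sq
  have h2 := hs.mul hs
  have h3 : AS (ss * ss) (1 + (-1) * 1) := by
    have := (AS_C 1).add ((AS_C (-1)).mul AS_X)
    convert this using 1
    rw [map_neg, map_one]
    linear_combination ss_sq
  have := h2.unique h3
  have h4 : (2 * (TT * TT) + (-1)) ^ 2 = 0 := by linarith
  have h5 := pow_eq_zero_iff (two_ne_zero) |>.1 h4
  linarith

lemma bc_prod (α : ℝ) (n : ℕ) : bc α n * n.factorial = ∏ j ∈ Finset.range n, (α + j) := by
  induction n with
  | zero => simp [bc]
  | succ n ih =>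
    rw [Finset.prod_range_succ, ← ih, bc, Nat.factorial_succ]
    push_cast
    field_simp
    ring

lemma bc_tendsto0 : Tendsto (fun m : ℕ => bc (3/4) m * (m:ℝ) ^ (1/4 : ℝ)) atTop
    (nhds (1 / Real.Gamma (3/4))) := by
  have h1 := Real.GammaSeq_tendsto_Gamma (3/4)
  have hG : Real.Gamma (3/4) ≠ 0 := (Real.Gamma_pos_of_pos (by norm_num)).ne'
  have h2 : Tendsto (fun m : ℕ => (m:ℝ) / (m + 3/4)) atTop (nhds 1) :=
    tendsto_natCast_div_add_atTop (3/4 : ℝ)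
  have h3 := h2.div h1 hG
  refine h3.congr' ?_
  filter_upwards [eventually_ge_atTop 1] with m hm
  have hm' : (0:ℝ) < m := by exact_mod_cast hm
  simp only [Pi.div_apply, Real.GammaSeq]
  rw [Finset.prod_range_succ, ← bc_prod]
  have hb := bc_pos m
  have e : (m:ℝ) ^ (3/4 : ℝ) * (m:ℝ) ^ (1/4 : ℝ) = m := by
    rw [← Real.rpow_add hm']; norm_num
  have h34 : (0:ℝ) < (m:ℝ) ^ (3/4 : ℝ) := by positivity
  have hf : (0:ℝ) < m.factorial := by positivity
  generalize (m:ℝ) ^ (3/4 : ℝ) = A at *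
  generalize (m:ℝ) ^ (1/4 : ℝ) = B at *
  generalize bc (3/4) m = C at *
  generalize (m.factorial : ℝ) = F at *
  have h9 : (3/4 + (m:ℝ)) ≠ 0 := by positivity
  have h10 : ((m:ℝ) + 3/4) ≠ 0 := by positivity
  rw [div_div_eq_mul_div, div_eq_iff (by positivity), div_mul_eq_mul_div, div_eq_iff h10]
  linear_combination -C * F * (3/4 + (m:ℝ)) * e

lemma shift_tendsto (k : ℕ) : Tendsto (fun m : ℕ => ((m + k : ℕ) : ℝ) / m) atTop (nhds 1) := by
  have h2 : Tendsto (fun m : ℕ => (m:ℝ) / (m + k)) atTop (nhds 1) :=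
    tendsto_natCast_div_add_atTop (k : ℝ)
  have := h2.inv₀ one_ne_zero
  simpa using this

lemma bc_tendsto (k : ℕ) : Tendsto (fun m : ℕ => bc (3/4) (m - k) * (m:ℝ) ^ (1/4 : ℝ)) atTop
    (nhds (1 / Real.Gamma (3/4))) := by
  rw [← tendsto_add_atTop_iff_nat k]
  have h := bc_tendsto0.mul ((shift_tendsto k).rpow_const (p := (1/4:ℝ)) (by simp))
  rw [Real.one_rpow, mul_one] at h
  refine h.congr' ?_
  filter_upwards [eventually_ge_atTop 1] with m hm
  have hm' : (0:ℝ) < m := by exact_mod_cast hm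
  rw [Nat.add_sub_cancel, mul_assoc, ← Real.mul_rpow hm'.le (by positivity), mul_div_cancel₀ _ hm'.ne']

lemma pp_tendsto : Tendsto (fun m : ℕ => pp m * (m:ℝ) ^ (1/4 : ℝ)) atTop
    (nhds (TT * (1 / Real.Gamma (3/4)))) := by
  have hs : Summable (fun k : ℕ => ((k:ℝ) + 1) ^ (-(5/4) : ℝ)) := summable_shift _ (by norm_num)
  have key := tendsto_tsum_of_dominated_convergence (𝓕 := (atTop : Filter ℕ))
    (f := fun m k => if k ≤ m then gc k * (bc (3/4) (m - k) * (m:ℝ) ^ (1/4 : ℝ)) else 0)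
    (g := fun k => gc k * (1 / Real.Gamma (3/4))) hs ?_ ?_
  · rw [tsum_mul_right] at key
    refine key.congr ?_
    intro m
    rw [tsum_eq_sum (s := Finset.range (m+1))]
    · rw [pp, mul_comm (bs _), PowerSeries.coeff_mul,
        Finset.Nat.sum_antidiagonal_eq_sum_range_succ_mk, Finset.sum_mul]
      apply Finset.sum_congr rfl
      intro k hk
      rw [if_pos (by simpa [Nat.lt_succ_iff] using hk)]
      simp only [bs, PowerSeries.coeff_mk, gc]
      ring
    · intro k hk
      rw [if_neg (by simpa [Nat.lt_succ_iff] using hk)]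
  · intro k
    refine ((bc_tendsto k).const_mul (gc k)).congr' ?_
    filter_upwards [eventually_ge_atTop k] with m hm
    rw [if_pos hm]
  · refine Eventually.of_forall (fun m k => ?_)
    split_ifs with hk
    · have hb := bc_le (m - k)
      have hp := bc_pos (m - k)
      have h1 : (m:ℝ) ^ (1/4:ℝ) ≤ (((m - k : ℕ):ℝ) + 1) ^ (1/4:ℝ) * ((k:ℝ) + 1) ^ (1/4:ℝ) := by
        rw [← Real.mul_rpow (by positivity) (by positivity)]
        apply Real.rpow_le_rpow (by positivity) _ (by norm_num)
        obtain ⟨a, rfl⟩ := Nat.exists_eq_add_of_le hk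
        rw [Nat.add_sub_cancel_left]
        push_cast
        have : (0:ℝ) ≤ (a:ℝ) * k := by positivity
        nlinarith
      have h2 : bc (3/4) (m - k) * (m:ℝ) ^ (1/4 : ℝ) ≤ ((k:ℝ) + 1) ^ (1/4:ℝ) := by
        calc _ ≤ bc (3/4) (m - k) * ((((m - k : ℕ):ℝ) + 1) ^ (1/4:ℝ) * ((k:ℝ) + 1) ^ (1/4:ℝ)) :=
              mul_le_mul_of_nonneg_left h1 hp.le
          _ = (bc (3/4) (m - k) * (((m - k : ℕ):ℝ) + 1) ^ (1/4:ℝ)) * ((k:ℝ) + 1) ^ (1/4:ℝ) := by ring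
          _ ≤ 1 * ((k:ℝ) + 1) ^ (1/4:ℝ) := mul_le_mul_of_nonneg_right hb (by positivity)
          _ = _ := one_mul _
      rw [norm_mul, Real.norm_of_nonneg (by positivity : 0 ≤ bc (3/4) (m - k) * (m:ℝ) ^ (1/4 : ℝ)),
        Real.norm_eq_abs]
      calc _ ≤ ((k:ℝ) + 1) ^ (-(3/2) : ℝ) * ((k:ℝ) + 1) ^ (1/4:ℝ) :=
            mul_le_mul (gc_le k) h2 (by positivity) (by positivity)
        _ = _ := by rw [← Real.rpow_add (by positivity)]; norm_num
    · rw [norm_zero]; positivity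

lemma TT_eq : TT = 1 / Real.sqrt 2 := by
  have hG : 0 < Real.Gamma (3/4) := Real.Gamma_pos_of_pos (by norm_num)
  have h0 : 0 ≤ TT * (1 / Real.Gamma (3/4)) :=
    ge_of_tendsto' pp_tendsto (fun m => mul_nonneg (pp_nonneg m) (by positivity))
  have h1 : 0 ≤ TT := nonneg_of_mul_nonneg_left h0 (by positivity)
  rw [← Real.sqrt_sq h1, TT_sq, Real.sqrt_div (by norm_num), Real.sqrt_one]

end SlitAux
open SlitAux
/-- for diagonal steps, `a(n) ∼ (1/(2^{1/4}Γ(3/4))) · 4ⁿ · n^{−1/4}`. -/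
theorem diag_slit_plane_asymptotics :
    Tendsto (fun n : ℕ =>
        (slitTotal diagSteps n : ℝ) /
          (1 / ((2 : ℝ) ^ ((1 : ℝ)/4) * Real.Gamma (3/4))
            * 4 ^ n * (n : ℝ) ^ (-(1/4 : ℝ))))
      atTop (nhds 1) := by
  have hG : 0 < Real.Gamma (3/4) := Real.Gamma_pos_of_pos (by norm_num)
  have hdiv : Tendsto (fun n : ℕ => n / 2) atTop atTop :=
    Nat.tendsto_div_const_atTop (by norm_num)
  have h1 := pp_tendsto.comp hdiv
  have h2 : Tendsto (fun n : ℕ => (n:ℝ) / ((n / 2 : ℕ) : ℝ)) atTop (nhds 2) := by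
    have hh : Tendsto (fun n : ℕ => (((n / 2 : ℕ) : ℝ))⁻¹) atTop (nhds 0) :=
      (tendsto_inv_atTop_zero.comp tendsto_natCast_atTop_atTop).comp hdiv
    have hup : Tendsto (fun n : ℕ => 2 + (((n / 2 : ℕ) : ℝ))⁻¹) atTop (nhds 2) := by
      simpa using hh.const_add 2
    refine tendsto_of_tendsto_of_tendsto_of_le_of_le' tendsto_const_nhds hup ?_ ?_
    · filter_upwards [eventually_ge_atTop 2] with n hn
      have : (0:ℝ) < ((n/2 : ℕ) : ℝ) := by exact_mod_cast (by omega : 0 < n / 2)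
      rw [le_div_iff₀ this]
      exact_mod_cast (by omega : 2 * (n / 2) ≤ n)
    · filter_upwards [eventually_ge_atTop 2] with n hn
      have : (0:ℝ) < ((n/2 : ℕ) : ℝ) := by exact_mod_cast (by omega : 0 < n / 2)
      rw [div_le_iff₀ this, add_mul, inv_mul_cancel₀ this.ne']
      exact_mod_cast (by omega : n ≤ 2 * (n / 2) + 1)
  have h3 := (h1.mul (h2.rpow_const (p := (1/4:ℝ)) (by simp))).mul_const
    ((2 : ℝ) ^ ((1 : ℝ)/4) * Real.Gamma (3/4))
  have hlim : TT * (1 / Real.Gamma (3/4)) * 2 ^ (1/4:ℝ) * ((2 : ℝ) ^ ((1 : ℝ)/4) * Real.Gamma (3/4)) = 1 := by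
    have e : (2:ℝ) ^ (1/4:ℝ) * 2 ^ (1/4:ℝ) = Real.sqrt 2 := by
      rw [← Real.rpow_add (by norm_num), Real.sqrt_eq_rpow]; norm_num
    have hs : Real.sqrt 2 ≠ 0 := by positivity
    calc _ = TT * (2 ^ (1/4:ℝ) * 2 ^ (1/4:ℝ)) * (1 / Real.Gamma (3/4) * Real.Gamma (3/4)) := by ring
      _ = 1 := by rw [e, TT_eq]; field_simp
  rw [hlim] at h3
  refine h3.congr' ?_
  filter_upwards [eventually_ge_atTop 2] with n hn
  have hm : (0:ℝ) < ((n/2 : ℕ) : ℝ) := by exact_mod_cast (by omega : 0 < n / 2)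
  have hn' : (0:ℝ) < n := by exact_mod_cast (by omega : 0 < n)
  rw [total_pp]
  simp only [Function.comp]
  rw [mul_assoc (pp _), ← Real.mul_rpow hm.le (by positivity), mul_div_cancel₀ _ hm.ne',
    Real.rpow_neg hn'.le]
  have : (0:ℝ) < (n:ℝ) ^ (1/4:ℝ) := by positivity
  field_simp
end

section
/- For all n ≥ 0, the number of walks on the slit plane of length 2n+1 ending at (1,0) equals the Catalan number C_{2n+1} = binom(4n+2, 2n+1)/(2n+2); and a_{1,0}(2n) = 0. -/
open Filter

/-- `a_{i,j}(n)`: the number of walks on the slit plane of length `n` ending at `(i,j)`. -/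
noncomputable def slitCount (A : Set (ℤ × ℤ)) (i j : ℤ) (n : ℕ) : ℕ :=
  Nat.card {w : Fin (n+1) → ℤ × ℤ // IsSlitWalk A n w ∧ w (Fin.last n) = (i, j)}

namespace SlitAux

/-- Vectors of the four steps. -/
def vec : Fin 4 → ℤ × ℤ := ![(1,0), (-1,0), (0,1), (0,-1)]

/-- Vertical reflection of steps. -/
def flip : Fin 4 → Fin 4 := ![0, 1, 3, 2]

lemma flip_flip (a : Fin 4) : flip (flip a) = a := by revert a; decide
lemma vec_flip_fst (a : Fin 4) : (vec (flip a)).1 = (vec a).1 := by revert a; decide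
lemma vec_flip_snd (a : Fin 4) : (vec (flip a)).2 = -(vec a).2 := by revert a; decide
lemma vec_snd_le (a : Fin 4) : (vec a).2 ≤ 1 := by revert a; decide
lemma vec_snd_ge (a : Fin 4) : -1 ≤ (vec a).2 := by revert a; decide
lemma vec_inj : Function.Injective vec := by decide
lemma vec_parity (a : Fin 4) : ((vec a).1 + (vec a).2) % 2 = 1 := by revert a; decide
lemma vec_mem (a : Fin 4) : vec a ∈ sqSteps := by
  fin_cases a <;> simp [vec, sqSteps]
lemma mem_vec {v : ℤ × ℤ} (h : v ∈ sqSteps) : ∃ a, vec a = v := by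
  simp only [sqSteps, Set.mem_insert_iff, Set.mem_singleton_iff] at h
  rcases h with h | h | h | h
  · exact ⟨0, h.symm⟩
  · exact ⟨1, h.symm⟩
  · exact ⟨2, h.symm⟩
  · exact ⟨3, h.symm⟩

/-- Position after `m` steps of the periodic walk. -/
def pos {n : ℕ} (σ : ZMod n → Fin 4) (m : ℕ) : ℤ × ℤ :=
  ∑ k ∈ Finset.range m, vec (σ (k : ZMod n))

variable {n : ℕ}

lemma pos_zero (σ : ZMod n → Fin 4) : pos σ 0 = 0 := by simp [pos]

lemma pos_succ (σ : ZMod n → Fin 4) (m : ℕ) :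
    pos σ (m + 1) = pos σ m + vec (σ (m : ZMod n)) := by
  simp [pos, Finset.sum_range_succ]

/-- Rotation of a step sequence. -/
def rot (i : ℕ) : (ZMod n → Fin 4) ≃ (ZMod n → Fin 4) :=
  (Equiv.addRight (-(i : ZMod n))).arrowCongr (Equiv.refl _)

lemma rot_apply (i : ℕ) (σ : ZMod n → Fin 4) (k : ZMod n) : rot i σ k = σ (k + i) := by
  simp [rot, Equiv.arrowCongr]

lemma pos_rot (i : ℕ) (σ : ZMod n → Fin 4) (m : ℕ) :
    pos (rot i σ) m = pos σ (i + m) - pos σ i := by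
  induction m with
  | zero => simp [pos_zero]
  | succ m ih =>
    rw [pos_succ, ih, ← add_assoc, pos_succ, rot_apply]
    push_cast
    rw [add_comm (m : ZMod n)]
    abel

lemma pos_add_n (σ : ZMod n → Fin 4) (m : ℕ) : pos σ (m + n) = pos σ m + pos σ n := by
  induction m with
  | zero => simp [pos_zero]
  | succ m ih =>
    rw [show m + 1 + n = m + n + 1 by ring, pos_succ, ih, pos_succ]
    push_cast
    rw [ZMod.natCast_self, add_zero]
    abel

lemma pos_rot_n (i : ℕ) (σ : ZMod n → Fin 4) : pos (rot i σ) n = pos σ n := by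
  rw [pos_rot, pos_add_n]; abel

lemma pos_parity (σ : ZMod n → Fin 4) (m : ℕ) :
    ((pos σ m).1 + (pos σ m).2) % 2 = (m : ℤ) % 2 := by
  induction m with
  | zero => simp [pos_zero]
  | succ m ih =>
    have := vec_parity (σ (m : ZMod n))
    rw [pos_succ]
    simp only [Prod.fst_add, Prod.snd_add]
    push_cast
    omega

lemma pos_snd_bound (σ : ZMod n → Fin 4) (m : ℕ) :
    -(m : ℤ) ≤ (pos σ m).2 ∧ (pos σ m).2 ≤ m := by
  induction m with
  | zero => simp [pos_zero]
  | succ m ih =>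
    have h1 := vec_snd_le (σ (m : ZMod n))
    have h2 := vec_snd_ge (σ (m : ZMod n))
    rw [pos_succ]
    simp only [Prod.snd_add]
    push_cast
    omega

/-- The walk avoids the slit at times `1..n`. -/
def Good (σ : ZMod n → Fin 4) : Prop := ∀ m, 1 ≤ m → m ≤ n → pos σ m ∉ slitH

lemma good_rot (i : ℕ) (σ : ZMod n → Fin 4) : Good (rot i σ) ↔
    ∀ m, 1 ≤ m → m ≤ n → (pos σ (i+m)).2 = (pos σ i).2 → (pos σ i).1 < (pos σ (i+m)).1 := by
  unfold Good
  refine forall_congr' fun m => forall_congr' fun _ => forall_congr' fun _ => ?_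
  rw [pos_rot]
  simp only [slitH, Set.mem_ofPred_eq, Prod.fst_sub, Prod.snd_sub, not_and, not_le]
  constructor
  · intro h e
    have := h (by omega)
    omega
  · intro h e
    have := h (by omega)
    omega

open Classical in
/-- Cycle lemma: the good starting points correspond to the visited heights. -/
lemma cycle (σ : ZMod n → Fin 4) (hσ : pos σ n = (1, 0)) :
    ((Finset.range n).filter fun i => Good (rot i σ)).card =
    ((Finset.range n).image fun i => (pos σ i).2).card := by
  have per : ∀ m, (pos σ (m + n)).1 = (pos σ m).1 + 1 ∧ (pos σ (m + n)).2 = (pos σ m).2 := by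
    intro m; rw [pos_add_n, hσ]; simp
  rw [← Finset.card_image_of_injOn (f := fun i => (pos σ i).2)]
  · congr 1
    ext h
    simp only [Finset.mem_image, Finset.mem_filter, Finset.mem_range]
    constructor
    · rintro ⟨i, ⟨hi, -⟩, rfl⟩
      exact ⟨i, hi, rfl⟩
    · rintro ⟨k, hk, rfl⟩
      obtain ⟨i, hi, hmin⟩ := Finset.exists_min_image
        ((Finset.range n).filter fun i => (pos σ i).2 = (pos σ k).2)
        (fun i => toLex ((pos σ i).1, -(i : ℤ))) ⟨k, by simp [hk]⟩
      simp only [Finset.mem_filter, Finset.mem_range] at hi hmin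
      refine ⟨i, ⟨hi.1, ?_⟩, hi.2⟩
      rw [good_rot]
      intro m h1 h2 hy
      by_cases hlt : i + m < n
      · have := hmin (i + m) ⟨hlt, by rw [hy, hi.2]⟩
        rw [Prod.Lex.toLex_le_toLex] at this
        rcases this with h | ⟨_, h⟩
        · exact h
        · push_cast at h
          omega
      · obtain ⟨j, hj⟩ : ∃ j, i + m = j + n := ⟨i + m - n, by omega⟩
        rw [hj] at hy ⊢
        rw [(per j).1]
        rw [(per j).2] at hy
        have := hmin j ⟨by omega, by rw [hy, hi.2]⟩
        rw [Prod.Lex.toLex_le_toLex] at this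
        rcases this with h | ⟨h, _⟩
        · simp only at h
          omega
        · simp only at h
          omega
  · have key : ∀ i j, i < j → j < n → Good (rot i σ) → Good (rot j σ) →
        (pos σ i).2 = (pos σ j).2 → False := by
      intro i j hij hj gi gj e
      rw [good_rot] at gi gj
      have h1 := gi (j - i) (by omega) (by omega)
      rw [show i + (j - i) = j by omega] at h1
      have h2 := gj (i + n - j) (by omega) (by omega)
      rw [show j + (i + n - j) = i + n by omega, (per i).1, (per i).2] at h2
      have := h1 e.symm
      have := h2 e
      omega
    intro i hi j hj e
    simp only [Finset.coe_filter, Finset.mem_range, Set.mem_ofPred_eq] at hi hj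
    rcases lt_trichotomy i j with h | h | h
    · exact (key i j h hj.1 hi.2 hj.2 e).elim
    · exact h
    · exact (key j i h hi.1 hj.2 hi.2 e.symm).elim

/-- Height `h` has been visited by time `m`. -/
def Vis (h : ℤ) (σ : ZMod n → Fin 4) (m : ℕ) : Prop := ∃ j ≤ m, (pos σ j).2 = h

lemma vis_succ (h : ℤ) (σ : ZMod n → Fin 4) (m : ℕ) :
    Vis h σ (m+1) ↔ Vis h σ m ∨ (pos σ (m+1)).2 = h := by
  constructor
  · rintro ⟨j, hj, e⟩
    rcases Nat.lt_or_ge m j with h1 | h1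
    · right
      rwa [show m + 1 = j by omega]
    · exact Or.inl ⟨j, h1, e⟩
  · rintro (⟨j, hj, e⟩ | e)
    · exact ⟨j, by omega, e⟩
    · exact ⟨_, le_rfl, e⟩

open Classical in
/-- Reflection after the first visit of height `h`. -/
noncomputable def refl (h : ℤ) (σ : ZMod n → Fin 4) : ZMod n → Fin 4 := fun k =>
  if Vis h σ k.val then flip (σ k) else σ k

lemma pos_refl_fst (h : ℤ) (σ : ZMod n → Fin 4) (m : ℕ) :
    (pos (refl h σ) m).1 = (pos σ m).1 := by
  induction m with
  | zero => simp [pos_zero]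
  | succ m ih =>
    rw [pos_succ, pos_succ, Prod.fst_add, Prod.fst_add, ih]
    unfold refl
    split_ifs
    · rw [vec_flip_fst]
    · rfl

open Classical in
lemma pos_refl_snd (h : ℤ) (σ : ZMod n → Fin 4) (m : ℕ) (hm : m ≤ n) :
    (pos (refl h σ) m).2 = if Vis h σ m then 2 * h - (pos σ m).2 else (pos σ m).2 := by
  induction m with
  | zero =>
    simp only [pos_zero, Vis]
    split_ifs with h0
    · obtain ⟨j, hj, e⟩ := h0
      rw [Nat.le_zero.mp hj, pos_zero] at e
      simp at e ⊢
      omega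
    · rfl
  | succ m ih =>
    have hv : ((m : ZMod n)).val = m := ZMod.val_cast_of_lt (by omega)
    rw [pos_succ, Prod.snd_add, ih (by omega)]
    have hs : (pos σ (m+1)).2 = (pos σ m).2 + (vec (σ (m : ZMod n))).2 := by
      rw [pos_succ, Prod.snd_add]
    unfold refl
    rw [hv]
    by_cases h1 : Vis h σ m
    · have h2 : Vis h σ (m+1) := (vis_succ h σ m).2 (Or.inl h1)
      rw [if_pos h1, if_pos h1, if_pos h2, vec_flip_snd, hs]
      ring
    · rw [if_neg h1, if_neg h1]
      split_ifs with h2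
      · rcases (vis_succ h σ m).1 h2 with h3 | h3
        · exact absurd h3 h1
        · omega
      · exact hs.symm

lemma pos_refl_iff (h : ℤ) (σ : ZMod n → Fin 4) (m : ℕ) (hm : m ≤ n) :
    (pos (refl h σ) m).2 = h ↔ (pos σ m).2 = h := by
  classical
  rw [pos_refl_snd h σ m hm]
  split_ifs
  · omega
  · rfl

lemma vis_refl (h : ℤ) (σ : ZMod n → Fin 4) (m : ℕ) (hm : m ≤ n) :
    Vis h (refl h σ) m ↔ Vis h σ m := by
  unfold Vis
  refine exists_congr fun j => and_congr_right fun hj => pos_refl_iff h σ j (hj.trans hm)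

lemma refl_refl [NeZero n] (h : ℤ) (σ : ZMod n → Fin 4) : refl h (refl h σ) = σ := by
  classical
  funext k
  have hk := vis_refl h σ k.val (ZMod.val_lt k).le
  by_cases h1 : Vis h σ k.val
  · have h2 := hk.2 h1
    rw [refl, if_pos h2, refl, if_pos h1, flip_flip]
  · have h2 := fun h3 => h1 (hk.1 h3)
    rw [refl, if_neg h2, refl, if_neg h1]

lemma vis_of_end (h : ℤ) (σ : ZMod n → Fin 4) (m : ℕ) (he : (pos σ m).2 = 2 * h) :
    Vis h σ m := by
  have h0 : (pos σ 0).2 = 0 := by rw [pos_zero]; rfl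
  have hs : ∀ m, (pos σ (m+1)).2 = (pos σ m).2 + (vec (σ (m : ZMod n))).2 := by
    intro m; rw [pos_succ, Prod.snd_add]
  by_contra hv
  have hne : ∀ j ≤ m, (pos σ j).2 ≠ h := fun j hj e => hv ⟨j, hj, e⟩
  have hz := hne 0 (Nat.zero_le _)
  rw [h0] at hz
  rcases lt_or_gt_of_ne hz with hp | hp
  · have : ∀ j ≤ m, (pos σ j).2 < h := by
      intro j
      induction j with
      | zero => intro _; omega
      | succ j ih =>
        intro hj
        have := ih (by omega)
        have := hne _ hj
        have := hs j
        have := vec_snd_le (σ (j : ZMod n))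
        omega
    have := this m le_rfl
    omega
  · have : ∀ j ≤ m, h < (pos σ j).2 := by
      intro j
      induction j with
      | zero => intro _; omega
      | succ j ih =>
        intro hj
        have := ih (by omega)
        have := hne _ hj
        have := hs j
        have := vec_snd_ge (σ (j : ZMod n))
        omega
    have := this m le_rfl
    omega

open Classical in
lemma reflection [NeZero n] (h : ℤ) :
    (Finset.univ.filter fun σ : ZMod n → Fin 4 => pos σ n = (1, 0) ∧ Vis h σ n).card =
    (Finset.univ.filter fun σ : ZMod n → Fin 4 => pos σ n = (1, 2 * h)).card := by
  refine Finset.card_bij' (fun σ _ => refl h σ) (fun σ _ => refl h σ) ?_ ?_ ?_ ?_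
  · intro σ hσ
    simp only [Finset.mem_filter, Finset.mem_univ, true_and] at hσ ⊢
    refine Prod.ext ?_ ?_
    · rw [pos_refl_fst, hσ.1]
    · rw [pos_refl_snd _ _ _ le_rfl, if_pos hσ.2, hσ.1]; simp
  · intro σ hσ
    simp only [Finset.mem_filter, Finset.mem_univ, true_and] at hσ ⊢
    have hv := vis_of_end h σ n (by rw [hσ])
    refine ⟨Prod.ext ?_ ?_, (vis_refl h σ n le_rfl).2 hv⟩
    · rw [pos_refl_fst, hσ]
    · rw [pos_refl_snd _ _ _ le_rfl, if_pos hv, hσ]; simp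
  · intro σ _; exact refl_refl h σ
  · intro σ _; exact refl_refl h σ

lemma sum_zmod [NeZero n] {M : Type*} [AddCommMonoid M] (f : ZMod n → M) :
    ∑ k ∈ Finset.range n, f (k : ZMod n) = ∑ i, f i := by
  refine Finset.sum_bij' (fun k _ => (k : ZMod n)) (fun i _ => i.val) ?_ ?_ ?_ ?_ ?_
  · simp
  · intro i _; simpa using ZMod.val_lt i
  · intro k hk; exact ZMod.val_cast_of_lt (by simpa using hk)
  · intro i _; simp
  · simp

/-- Shifted horizontal displacement. -/
def ex : Fin 4 → ℕ := ![2, 0, 1, 1]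

lemma ex_eq (a : Fin 4) : (ex a : ℤ) = (vec a).1 + 1 := by revert a; decide

lemma sum_ex [NeZero n] (σ : ZMod n → Fin 4) : ((∑ i, ex (σ i) : ℕ) : ℤ) = (pos σ n).1 + n := by
  push_cast
  simp only [ex_eq, Finset.sum_add_distrib]
  rw [pos, sum_zmod (fun k => vec (σ k)), Prod.fst_sum]
  simp [ZMod.card]

open Classical Polynomial in
lemma count_x [NeZero n] :
    (Finset.univ.filter fun σ : ZMod n → Fin 4 => (pos σ n).1 = 1).card = (2*n).choose (n+1) := by
  have key : (∑ σ : ZMod n → Fin 4, (X : ℕ[X]) ^ (∑ i, ex (σ i))) = (1 + X) ^ (2*n) := by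
    calc _ = ∑ σ : ZMod n → Fin 4, ∏ i, (X : ℕ[X]) ^ (ex (σ i)) := by
            simp only [Finset.prod_pow_eq_pow_sum]
      _ = ∏ _i : ZMod n, ∑ a : Fin 4, (X : ℕ[X]) ^ (ex a) := by
            rw [Finset.prod_univ_sum, Fintype.piFinset_univ]
      _ = _ := by
            rw [Finset.prod_const, Finset.card_univ, ZMod.card, pow_mul]
            congr 1
            simp [Fin.sum_univ_four, ex]
            ring
  have := congrArg (fun p => p.coeff (n+1)) key
  simp only [Polynomial.finsetSum_coeff, Polynomial.coeff_X_pow,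
    Polynomial.coeff_one_add_X_pow, Nat.cast_id] at this
  rw [← this, Finset.card_filter]
  refine Finset.sum_congr rfl fun σ _ => ?_
  have := sum_ex σ
  congr 1
  apply propext
  omega

open Classical in
lemma main_count [NeZero n] (hodd : n % 2 = 1) :
    n * (Finset.univ.filter fun σ : ZMod n → Fin 4 => pos σ n = (1, 0) ∧ Good σ).card =
      (2*n).choose (n+1) := by
  set T := Finset.univ.filter fun σ : ZMod n → Fin 4 => pos σ n = (1, 0) with hT
  have hn : 0 < n := Nat.pos_of_ne_zero (NeZero.ne n)
  have h1 : ∀ i : ℕ, (T.filter fun σ => Good (rot i σ)).card =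
      (Finset.univ.filter fun σ : ZMod n → Fin 4 => pos σ n = (1, 0) ∧ Good σ).card := by
    intro i
    refine Finset.card_equiv (rot i) fun σ => ?_
    simp [hT, pos_rot_n]
  have h2 : n * (Finset.univ.filter fun σ : ZMod n → Fin 4 => pos σ n = (1, 0) ∧ Good σ).card
      = ∑ σ ∈ T, ((Finset.range n).filter fun i => Good (rot i σ)).card := by
    calc _ = ∑ i ∈ Finset.range n, (T.filter fun σ => Good (rot i σ)).card := by
            simp only [h1]; simp
      _ = _ := by
            simp only [Finset.card_filter]
            exact Finset.sum_comm
  have h3 : ∀ σ ∈ T, ((Finset.range n).filter fun i => Good (rot i σ)).card =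
      ((Finset.Icc (-(n:ℤ)) n).filter fun h => Vis h σ n).card := by
    intro σ hσ
    have hσ' : pos σ n = (1, 0) := by simpa [hT] using hσ
    rw [cycle σ hσ']
    congr 1
    ext h
    simp only [Finset.mem_image, Finset.mem_range, Finset.mem_filter, Finset.mem_Icc]
    constructor
    · rintro ⟨k, hk, rfl⟩
      have := pos_snd_bound σ k
      exact ⟨by omega, k, hk.le, rfl⟩
    · rintro ⟨_, k, hk, rfl⟩
      rcases hk.lt_or_eq with h | h
      · exact ⟨k, h, rfl⟩
      · refine ⟨0, hn, ?_⟩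
        rw [h, hσ', pos_zero]; rfl
  rw [h2, Finset.sum_congr rfl h3]
  calc _ = ∑ h ∈ Finset.Icc (-(n:ℤ)) n, (T.filter fun σ => Vis h σ n).card := by
          simp only [Finset.card_filter]
          exact Finset.sum_comm
    _ = ∑ h ∈ Finset.Icc (-(n:ℤ)) n,
        ((Finset.univ.filter fun σ : ZMod n → Fin 4 => (pos σ n).1 = 1).filter
          fun σ => (pos σ n).2 / 2 = h).card := by
          refine Finset.sum_congr rfl fun h _ => ?_
          rw [hT, Finset.filter_filter, reflection, Finset.filter_filter]
          congr 1
          ext σ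
          simp only [Finset.mem_filter, Finset.mem_univ, true_and, Prod.ext_iff]
          have := pos_parity σ n
          omega
    _ = _ := by
          rw [← count_x]
          symm
          refine Finset.card_eq_sum_card_fiberwise fun σ _ => ?_
          have := pos_snd_bound σ n
          simp only [Finset.coe_Icc, Set.mem_Icc]
          omega

open Classical in
lemma slitCount_eq [NeZero n] : slitCount sqSteps 1 0 n =
    (Finset.univ.filter fun σ : ZMod n → Fin 4 => pos σ n = (1, 0) ∧ Good σ).card := by
  rw [← Fintype.card_subtype, ← Nat.card_eq_fintype_card, slitCount]
  symm
  refine Nat.card_congr (Equiv.ofBijective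
    (fun σ => ⟨fun m => pos σ.1 m, ⟨?_, ?_, ?_⟩, ?_⟩) ⟨?_, ?_⟩)
  · exact pos_zero _
  · intro m
    simp only [Fin.val_succ, Fin.val_castSucc, pos_succ, add_sub_cancel_left]
    exact vec_mem _
  · intro m hm
    exact σ.2.2 m hm (by omega)
  · simpa using σ.2.1
  · rintro ⟨σ, hσ⟩ ⟨τ, hτ⟩ e
    simp only [Subtype.mk.injEq] at e ⊢
    have e' : ∀ m ≤ n, pos σ m = pos τ m := by
      intro m hm
      have := congrFun e ⟨m, by omega⟩
      simpa using this
    funext k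
    have hk := ZMod.val_lt k
    have a1 := pos_succ σ k.val
    have a2 := pos_succ τ k.val
    rw [e' _ hk.le, e' _ hk, a2] at a1
    have := vec_inj (add_left_cancel a1)
    simpa using this.symm
  · rintro ⟨w, ⟨w0, ws, wH⟩, we⟩
    choose s hs using fun m => mem_vec (ws m)
    let σ : ZMod n → Fin 4 := fun k => s ⟨k.val, ZMod.val_lt k⟩
    have hp : ∀ m (hm : m < n + 1), pos σ m = w ⟨m, hm⟩ := by
      intro m
      induction m with
      | zero => intro _; rw [pos_zero]; exact w0.symm
      | succ m ih =>
        intro hm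
        have hv : ((m : ZMod n)).val = m := ZMod.val_cast_of_lt (by omega)
        have h1 : σ (m : ZMod n) = s ⟨m, by omega⟩ := by simp [σ, hv]
        rw [pos_succ, ih (by omega), h1, hs]
        simp
    refine ⟨⟨σ, ?_, ?_⟩, ?_⟩
    · rw [hp n (by omega)]; exact we
    · intro m h1 h2
      rw [hp m (by omega)]
      exact wH ⟨m, by omega⟩ h1
    · apply Subtype.ext
      funext m
      exact hp m m.2

lemma walk_parity (N : ℕ) (w : Fin (N+1) → ℤ × ℤ) (hw : IsSlitWalk sqSteps N w) :
    ∀ m (hm : m < N + 1), ((w ⟨m, hm⟩).1 + (w ⟨m, hm⟩).2) % 2 = (m : ℤ) % 2 := by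
  obtain ⟨w0, ws, -⟩ := hw
  intro m
  induction m with
  | zero => intro _; have : w ⟨0, by omega⟩ = (0,0) := w0
            rw [this]; simp
  | succ m ih =>
    intro hm
    have h1 := ih (by omega)
    obtain ⟨a, ha⟩ := mem_vec (ws ⟨m, by omega⟩)
    have h2 := vec_parity a
    rw [ha] at h2
    simp only [Fin.succ_mk, Fin.castSucc_mk, Prod.fst_sub, Prod.snd_sub] at h2
    push_cast
    omega

end SlitAux

/-- `a_{1,0}(2n+1) = C_{2n+1}` and `a_{1,0}(2n) = 0`. -/
theorem slit_count_1_0 (n : ℕ) :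
    slitCount sqSteps 1 0 (2 * n + 1) = catalan (2 * n + 1)
    ∧ slitCount sqSteps 1 0 (2 * n) = 0 := by
  constructor
  · haveI : NeZero (2 * n + 1) := ⟨by omega⟩
    rw [SlitAux.slitCount_eq]
    have h := SlitAux.main_count (n := 2 * n + 1) (by omega)
    set A := Finset.card _ with hA
    clear_value A
    generalize 2 * n + 1 = k at h this ⊢
    have hk : 0 < k := Nat.pos_of_ne_zero (NeZero.ne k)
    have h1 := succ_mul_catalan_eq_centralBinom k
    rw [Nat.centralBinom] at h1
    have h2 := Nat.choose_succ_right_eq (2 * k) k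
    rw [← h, show 2 * k - k = k by omega, ← h1] at h2
    have : (k * (k + 1)) * A = (k * (k + 1)) * catalan k := by linarith
    exact Nat.eq_of_mul_eq_mul_left (by positivity) this
  · rw [slitCount, Nat.card_eq_zero]
    left
    refine ⟨fun ⟨w, hw, he⟩ => ?_⟩
    have h := SlitAux.walk_parity _ w hw (2 * n) (by omega)
    have he' : w ⟨2 * n, by omega⟩ = (1, 0) := he
    rw [he'] at h
    push_cast at h
    omega
end
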